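/- arXiv:2206.00579 — 3 statements merged into one kernel-verified Lean document; each statement's English description precedes it below -/
import Mathlib

section
/- Let n ≥ 1 and let K ≥ 0 be a real number. Let the vertices v₁, v₂, …, vₙ of the cycle graph Cₙ (indexed in cyclic order) be assigned real labels ℓ(vᵢ) with |ℓ(vᵢ)| ≤ K for all i, and set r = Σᵢ ℓ(vᵢ). Then there exists a sequence of subsets ∅ = X₀, X₁, …, X_T = V(Cₙ) of V(Cₙ) such that: each Xᵢ with 0 < i < T is a nonempty proper set of cyclically consecutive vertices (i.e., induces a path in Cₙ); the symmetric difference of Xᵢ and Xᵢ₊₁ is a single vertex for every 0 ≤ i < T; and for every 0 ≤ i ≤ T, |Σ_{v∈Xᵢ} ℓ(v) − (|Xᵢ|/n)·r| ≤ 2K. -/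
open Classical in
noncomputable def dmcE (c d r : Prop) : ZMod 2 := if ¬ (c ↔ d) ∧ r then 1 else 0

lemma dmcE_tri (a b c ra rb rc : Prop)
    (h : ¬ ((a ↔ b) ∧ (b ↔ c)) → (ra ↔ rb) ∧ (rb ↔ rc)) :
    dmcE a b ra + dmcE a c ra + dmcE b c rb = 0 := by
  unfold dmcE
  have h2 : (1 : ZMod 2) + 1 = 0 := by decide
  by_cases ha : a <;> by_cases hb : b <;> by_cases hc : c <;> by_cases hra : ra <;>
    by_cases hrb : rb <;> simp_all

lemma dmcE_symm (c d r s : Prop) (h : ¬ (c ↔ d) → (r ↔ s)) : dmcE c d r = dmcE d c s := by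
  unfold dmcE
  have e : (¬ (c ↔ d) ∧ r) ↔ (¬ (d ↔ c) ∧ s) := by tauto
  classical
  by_cases h1 : (¬ (c ↔ d) ∧ r)
  · rw [if_pos h1, if_pos (e.1 h1)]
  · rw [if_neg h1, if_neg (fun h2 => h1 (e.2 h2))]

lemma dmc_prop (a b c ga gb gc ra rb rc : Prop) (k1 : ¬ (b ↔ a) → gb ∧ ga)
    (k2 : ¬ (c ↔ a) → gc ∧ ga) (k3 : ¬ (b ↔ c) → gb ∧ gc)
    (c1 : ga → gb → (ra ↔ rb)) (c2 : ga → gc → (ra ↔ rc))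
    (hne : ¬ ((a ↔ b) ∧ (b ↔ c))) : (ra ↔ rb) ∧ (rb ↔ rc) := by
  have h : ga ∧ gb ∧ gc := by
    by_cases ha : a <;> by_cases hb : b <;> by_cases hc : c <;> simp [ha, hb, hc] at k1 k2 k3 hne ⊢ <;>
      simp [k1, k2, k3]
  obtain ⟨h1, h2, h3⟩ := h
  exact ⟨c1 h1 h2, (c1 h1 h2).symm.trans (c2 h1 h3)⟩

lemma dmc_rect (A B : ℕ) (hA : 0 < A) (hB : 0 < B) (f : ℕ → ℕ → ℝ) (M : ℝ)
    (bot : ∀ i ≤ A, 0 ≤ f i 0) (left : ∀ j ≤ B, f 0 j ≤ 0)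
    (top : ∀ i ≤ A, f i B ≤ 0) (right : ∀ j ≤ B, 0 ≤ f A j)
    (hH : ∀ i < A, ∀ j ≤ B, |f (i+1) j - f i j| ≤ M)
    (hV : ∀ i ≤ A, ∀ j < B, |f i (j+1) - f i j| ≤ M)
    (hD : ∀ i < A, ∀ j < B, |f (i+1) j - f i (j+1)| ≤ M)
    (R : ℕ → ℕ → Prop) (h0 : R 0 0)
    (cH : ∀ i < A, ∀ j ≤ B, |f i j| ≤ M → |f (i+1) j| ≤ M → (R i j ↔ R (i+1) j))
    (cV : ∀ i ≤ A, ∀ j < B, |f i j| ≤ M → |f i (j+1)| ≤ M → (R i j ↔ R i (j+1))) :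
    R A B := by
  obtain ⟨col, hcol⟩ : ∃ col : ℕ → ℕ → Prop, ∀ i j, col i j ↔
    (i = A ∨ (i ≠ 0 ∧ j ≠ B ∧ (j = 0 ∨ 0 < f i j))) := ⟨_, fun _ _ => Iff.rfl⟩
  have cp : ∀ i ≤ A, ∀ j ≤ B, col i j → 0 ≤ f i j := by
    intro i hi j hj h
    rw [hcol] at h
    rcases h with rfl | ⟨_, _, rfl | h⟩
    · exact right j hj
    · exact bot i hi
    · exact h.le
  have cn : ∀ i ≤ A, ∀ j ≤ B, ¬ col i j → f i j ≤ 0 := by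
    intro i hi j hj h
    rw [hcol] at h
    by_contra hf
    push Not at hf
    apply h
    right
    refine ⟨?_, ?_, Or.inr hf⟩
    · rintro rfl
      linarith [left j hj]
    · rintro rfl
      linarith [top i hi]
  -- bichromatic pairs are good
  have key : ∀ i ≤ A, ∀ j ≤ B, ∀ i' ≤ A, ∀ j' ≤ B, |f i j - f i' j'| ≤ M →
      ¬ (col i j ↔ col i' j') → |f i j| ≤ M ∧ |f i' j'| ≤ M := by
    intro i hi j hj i' hi' j' hj' h hne
    have a1 := cp i hi j hj
    have a2 := cn i hi j hj
    have a3 := cp i' hi' j' hj'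
    have a4 := cn i' hi' j' hj'
    rw [abs_le] at h
    simp only [abs_le]
    by_cases h1 : col i j <;> by_cases h2 : col i' j' <;> simp [h1, h2] at hne a1 a2 a3 a4
    · refine ⟨⟨?_, ?_⟩, ?_, ?_⟩ <;> linarith
    · refine ⟨⟨?_, ?_⟩, ?_, ?_⟩ <;> linarith
  let H : ℕ → ℕ → ZMod 2 := fun i j => dmcE (col i j) (col (i+1) j) (R i j)
  let V : ℕ → ℕ → ZMod 2 := fun i j => dmcE (col i j) (col i (j+1)) (R i j)
  have sq : ∀ i < A, ∀ j < B, H i j - H i (j+1) = V (i+1) j - V i j := by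
    intro i hi j hj
    have t1 := dmcE_tri (col i j) (col (i+1) j) (col i (j+1)) (R i j) (R (i+1) j) (R i (j+1)) (by
      intro hne
      have k1 := key (i+1) hi j hj.le i hi.le j hj.le (hH i hi j hj.le)
      have k2 := key i hi.le (j+1) hj i hi.le j hj.le (hV i hi.le j hj)
      have k3 := key (i+1) hi j hj.le i hi.le (j+1) hj (hD i hi j hj)
      exact dmc_prop _ _ _ _ _ _ _ _ _ k1 k2 k3 (cH i hi j hj.le) (cV i hi.le j hj) hne)
    have t2 := dmcE_tri (col (i+1) (j+1)) (col (i+1) j) (col i (j+1))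
      (R (i+1) (j+1)) (R (i+1) j) (R i (j+1)) (by
      intro hne
      have k1 := key (i+1) hi (j+1) hj i hi.le (j+1) hj (hH i hi (j+1) hj)
      have k2 := key (i+1) hi (j+1) hj (i+1) hi j hj.le (hV (i+1) hi j hj)
      have k3 := key (i+1) hi j hj.le i hi.le (j+1) hj (hD i hi j hj)
      exact dmc_prop _ _ _ _ _ _ _ _ _ (fun h => (k2 fun h' => h h'.symm).symm)
        (fun h => (k1 fun h' => h h'.symm).symm) k3 (fun x y => (cV (i+1) hi j hj y x).symm)
        (fun x y => (cH i hi (j+1) hj y x).symm) hne)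
    have e1 := dmcE_symm (col (i+1) (j+1)) (col (i+1) j) (R (i+1) (j+1)) (R (i+1) j) (by
      intro hne
      have k2 := key (i+1) hi (j+1) hj (i+1) hi j hj.le (hV (i+1) hi j hj) hne
      exact (cV (i+1) hi j hj k2.2 k2.1).symm)
    have e2 := dmcE_symm (col (i+1) (j+1)) (col i (j+1)) (R (i+1) (j+1)) (R i (j+1)) (by
      intro hne
      have k2 := key (i+1) hi (j+1) hj i hi.le (j+1) hj (hH i hi (j+1) hj) hne
      exact (cH i hi (j+1) hj k2.2 k2.1).symm)
    rw [e1, e2] at t2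
    show dmcE _ _ _ - dmcE _ _ _ = dmcE _ _ _ - dmcE _ _ _
    generalize dmcE (col i j) (col (i+1) j) (R i j) = x1 at *
    generalize dmcE (col i j) (col i (j+1)) (R i j) = x2 at *
    generalize dmcE (col (i+1) j) (col i (j+1)) (R (i+1) j) = x3 at *
    generalize dmcE (col (i+1) j) (col (i+1) (j+1)) (R (i+1) j) = x4 at *
    generalize dmcE (col i (j+1)) (col (i+1) (j+1)) (R i (j+1)) = x5 at *
    clear e1 e2
    revert x1 x2 x3 x4 x5
    decide
  have tot : ∑ i ∈ Finset.range A, (H i 0 - H i B) = ∑ j ∈ Finset.range B, (V A j - V 0 j) := by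
    have l1 : ∀ i, ∑ j ∈ Finset.range B, (H i j - H i (j+1)) = H i 0 - H i B := fun i =>
      Finset.sum_range_sub' (fun j => H i j) B
    have l2 : ∀ j, ∑ i ∈ Finset.range A, (V (i+1) j - V i j) = V A j - V 0 j := fun j =>
      Finset.sum_range_sub (fun i => V i j) A
    simp only [← l1, ← l2]
    rw [Finset.sum_comm]
    refine Finset.sum_congr rfl fun j hj => Finset.sum_congr rfl fun i hi => ?_
    exact sq i (Finset.mem_range.1 hi) j (Finset.mem_range.1 hj)
  have vz : ∑ j ∈ Finset.range B, (V A j - V 0 j) = 0 := by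
    refine Finset.sum_eq_zero fun j hj => ?_
    have : A ≠ 0 := hA.ne'
    simp [V, dmcE, hcol, this.symm]
  rw [vz, Finset.sum_sub_distrib, sub_eq_zero] at tot
  have s1 : ∑ i ∈ Finset.range A, H i 0 = 1 := by
    rw [Finset.sum_eq_single 0]
    · simp [H, dmcE, hcol, hA.ne, hB.ne, h0]
    · intro i hi hi0
      simp [H, dmcE, hcol, hB.ne, hi0]
    · intro h; simp at h; omega
  have s2 : ∑ i ∈ Finset.range A, H i B = H (A-1) B := by
    rw [Finset.sum_eq_single (A-1)]
    · intro i hi hi0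
      have := Finset.mem_range.1 hi
      have h1 : i ≠ A := by omega
      have h2 : i + 1 ≠ A := by omega
      simp [H, dmcE, hcol, h1, h2]
    · intro h; simp at h; omega
  rw [s1, s2] at tot
  have hA1 : A - 1 + 1 = A := by omega
  by_contra hR
  have hne : ¬ (col (A-1+1) B ↔ col (A-1) B) := by
    simp [hcol, hA1]; omega
  have k := key (A-1+1) hA1.le B le_rfl (A-1) (by omega) B le_rfl
    (hH (A-1) (by omega) B le_rfl) hne
  have := cH (A-1) (by omega) B le_rfl k.2 k.1
  rw [hA1] at this
  simp [H, dmcE, this, hR] at tot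



/-- Discrete mountain-climbing lemma (Lemma 7): given real labels of absolute value
at most `K` on the vertices of the cycle `Cₙ` (modelled as `ZMod n`) summing to `r`,
there is a sequence of subsets from `∅` to the whole vertex set, each intermediate set
being a nonempty proper arc of the cycle, consecutive sets differing in a single
vertex, and each partial sum staying within `2K` of its proportional share of `r`. -/
theorem discrete_mountain_climbing (n : ℕ) [NeZero n] (K : ℝ) (hK : 0 ≤ K)
    (ℓ : ZMod n → ℝ) (hℓ : ∀ v, |ℓ v| ≤ K) :
    ∃ (T : ℕ) (X : ℕ → Finset (ZMod n)),
      X 0 = ∅ ∧ X T = Finset.univ ∧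
      (∀ i, 0 < i → i < T → (X i).Nonempty ∧ X i ≠ Finset.univ ∧
        ∃ (a : ZMod n) (m : ℕ),
          X i = (Finset.range m).image (fun j : ℕ => a + (j : ZMod n))) ∧
      (∀ i < T, ∃ v : ZMod n, symmDiff (X i) (X (i + 1)) = {v}) ∧
      (∀ i ≤ T,
        |(∑ v ∈ X i, ℓ v) - ((X i).card : ℝ) / (n : ℝ) * (∑ v, ℓ v)| ≤ 2 * K) := by
  have hn : 0 < n := Nat.pos_of_ne_zero (NeZero.ne n)
  have hnR : (0 : ℝ) < n := by exact_mod_cast hn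
  by_cases hn1 : n = 1
  · subst hn1
    have hk := hℓ 0
    refine ⟨1, fun i => if i = 0 then ∅ else Finset.univ, by simp, by simp, ?_, ?_, ?_⟩
    · intro i h1 h2; omega
    · intro i hi
      refine ⟨0, ?_⟩
      have : i = 0 := by omega
      subst this
      ext v
      have := Subsingleton.elim v 0
      subst this
      simp [Finset.mem_symmDiff, -Finset.univ_unique]
    · intro i hi
      by_cases h : i = 0
      · simp [h]; exact hK
      · simp [h]; exact hK
  set r := ∑ v, ℓ v with hr
  let w : ZMod n → ℝ := fun v => ℓ v - r / n
  have hrn : |r / n| ≤ K := by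
    rw [abs_div, abs_of_pos hnR, div_le_iff₀ hnR]
    calc |r| ≤ ∑ v, |ℓ v| := Finset.abs_sum_le_sum_abs _ _
      _ ≤ ∑ v : ZMod n, K := Finset.sum_le_sum fun v _ => hℓ v
      _ = K * n := by simp [ZMod.card, mul_comm]
  have hw : ∀ v, |w v| ≤ 2 * K := by
    intro v
    have := abs_sub (ℓ v) (r / n)
    have := hℓ v
    simp only [w]; linarith
  have hww : ∀ u v, |w u - w v| ≤ 2 * K := by
    intro u v
    have := abs_sub (ℓ u) (ℓ v)
    have := hℓ v
    have := hℓ u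
    have e : w u - w v = ℓ u - ℓ v := by simp only [w]; ring
    rw [e]; linarith
  let S : ℕ → ℝ := fun k => ∑ i ∈ Finset.range k, w (i : ZMod n)
  have hS : ∀ k, S (k+1) = S k + w (k : ZMod n) := fun k => Finset.sum_range_succ _ _
  -- injectivity on short intervals
  have inj : ∀ a b : ℕ, b ≤ a + n →
      Set.InjOn (fun k : ℕ => (k : ZMod n)) (Finset.Ico a b : Finset ℕ) := by
    intro a b hab x hx y hy hxy
    simp only [Finset.coe_Ico, Set.mem_Ico] at hx hy
    have h1 : x ≡ y [MOD n] := (ZMod.natCast_eq_natCast_iff x y n).1 hxy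
    rcases le_total x y with h | h
    · have h2 := (Nat.modEq_iff_dvd' h).1 h1
      have := Nat.eq_zero_of_dvd_of_lt h2 (by omega)
      omega
    · have h2 := (Nat.modEq_iff_dvd' h).1 h1.symm
      have := Nat.eq_zero_of_dvd_of_lt h2 (by omega)
      omega
  let Y : ℕ → ℕ → Finset (ZMod n) := fun a b => (Finset.Ico a b).image (fun k : ℕ => (k : ZMod n))
  have Ycard : ∀ a b, b ≤ a + n → (Y a b).card = b - a := by
    intro a b h
    rw [Finset.card_image_of_injOn (inj a b h), Nat.card_Ico]
  have Yuniv : ∀ a, Y a (a+n) = Finset.univ := by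
    intro a
    apply Finset.eq_univ_of_card
    rw [Ycard _ _ le_rfl, ZMod.card]; omega
  have Ysum : ∀ a b, a ≤ b → b ≤ a + n → ∑ v ∈ Y a b, w v = S b - S a := by
    intro a b h0 h
    rw [Finset.sum_image (inj a b h), Finset.sum_Ico_eq_sub _ h0]
  have wsum : ∑ v, w v = 0 := by
    simp only [w, Finset.sum_sub_distrib, ← hr]
    simp [ZMod.card]
    field_simp
    simp
  have per : ∀ a, S (a+n) = S a := by
    intro a
    have := Ysum a (a+n) (by omega) le_rfl
    rw [Yuniv, wsum] at this
    linarith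
  have Ydev : ∀ a b, a ≤ b → b ≤ a + n →
      (∑ v ∈ Y a b, ℓ v) - ((Y a b).card : ℝ) / n * r = S b - S a := by
    intro a b h0 h
    rw [← Ysum a b h0 h]
    simp only [w, Finset.sum_sub_distrib, Finset.sum_const, nsmul_eq_mul]
    ring
  -- minimum
  obtain ⟨p, -, hp⟩ := Finset.exists_min_image (Finset.range n) S ⟨0, by simpa using hn⟩
  have hmin : ∀ k, S p ≤ S k := by
    intro k
    have hk : S (k % n) = S k := by
      have : ∀ m a, S (a + n * m) = S a := by
        intro m a
        induction m with
        | zero => simp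
        | succ m ih => rw [Nat.mul_succ, ← Nat.add_assoc, per, ih]
      conv_rhs => rw [← Nat.mod_add_div k n]
      rw [this]
    rw [← hk]
    exact hp _ (Finset.mem_range.2 (Nat.mod_lt _ hn))
  obtain ⟨B, hBm, hB⟩ := Finset.exists_max_image (Finset.Ico 1 n) (fun j => S (p + j))
    ⟨1, by simp; omega⟩
  have hB12 := Finset.mem_Ico.1 hBm
  have hmax : ∀ j ≤ n, S (p + j) ≤ S (p + B) := by
    intro j hj
    by_cases h0 : j = 0
    · subst h0; exact hmin _
    by_cases h1 : j = n
    · subst h1; rw [per]; exact hmin _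
    exact hB j (Finset.mem_Ico.2 ⟨by omega, by omega⟩)
  obtain ⟨A, hAB⟩ : ∃ A, A + B = n := ⟨n - B, by omega⟩
  have hA0 : 0 < A := by omega
  let f : ℕ → ℕ → ℝ := fun i j => S (p + n - i) - S (p + j)
  let good : ℕ × ℕ → Prop := fun x => x.1 ≤ A ∧ x.2 ≤ B ∧ |f x.1 x.2| ≤ 2 * K
  let st : ℕ × ℕ → ℕ × ℕ → Prop := fun x y =>
    (y.1 = x.1 + 1 ∧ y.2 = x.2) ∨ (y.1 = x.1 ∧ y.2 = x.2 + 1)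
  let G : SimpleGraph (ℕ × ℕ) := SimpleGraph.fromRel (fun x y => good x ∧ good y ∧ st x y)
  have S1 : ∀ i < n, S (p + n - i) = S (p + n - (i+1)) + w ((p + n - (i+1) : ℕ) : ZMod n) := by
    intro i hi
    rw [← hS]; congr 1; omega
  have g00 : good (0, 0) := by
    refine ⟨by simp, by simp, ?_⟩
    simp [f, per, hK]
  have reach : G.Reachable (0, 0) (A, B) := by
    refine dmc_rect A B hA0 (by omega) f (2 * K) ?_ ?_ ?_ ?_ ?_ ?_ ?_
      (fun i j => G.Reachable (0, 0) (i, j)) (SimpleGraph.Reachable.refl _) ?_ ?_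
    · intro i hi
      simp only [f, Nat.add_zero]; linarith [hmin (p + n - i)]
    · intro j hj
      simp only [f, Nat.sub_zero, per]; linarith [hmin (p + j)]
    · intro i hi
      have := hmax (n - i) (by omega)
      rw [← Nat.add_sub_assoc (by omega)] at this
      simp only [f]; linarith
    · intro j hj
      have := hmax j (by omega)
      have e : p + n - A = p + B := by omega
      simp only [f, e]; linarith
    · intro i hi j hj
      have e : f (i+1) j - f i j = - w ((p + n - (i+1) : ℕ) : ZMod n) := by
        simp only [f]; rw [S1 i (by omega)]; ring
      rw [e, abs_neg]; exact hw _
    · intro i hi j hj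
      have e : f i (j+1) - f i j = - w ((p + j : ℕ) : ZMod n) := by
        simp only [f]; rw [← Nat.add_assoc, hS]; ring
      rw [e, abs_neg]; exact hw _
    · intro i hi j hj
      have e : f (i+1) j - f i (j+1) = w ((p + j : ℕ) : ZMod n) - w ((p + n - (i+1) : ℕ) : ZMod n) := by
        simp only [f]; rw [← Nat.add_assoc, hS, S1 i (by omega)]; ring
      rw [e]; exact hww _ _
    · intro i hi j hj h1 h2
      have adj : G.Adj (i, j) (i+1, j) := by
        rw [SimpleGraph.fromRel_adj]
        refine ⟨by simp, Or.inl ⟨⟨hi.le, hj, h1⟩, ⟨hi, hj, h2⟩, Or.inl ⟨rfl, rfl⟩⟩⟩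
      exact ⟨fun h => h.trans adj.reachable, fun h => h.trans adj.symm.reachable⟩
    · intro i hi j hj h1 h2
      have adj : G.Adj (i, j) (i, j+1) := by
        rw [SimpleGraph.fromRel_adj]
        refine ⟨by simp, Or.inl ⟨⟨hi, hj.le, h1⟩, ⟨hi, hj, h2⟩, Or.inr ⟨rfl, rfl⟩⟩⟩
      exact ⟨fun h => h.trans adj.reachable, fun h => h.trans adj.symm.reachable⟩
  obtain ⟨W, hW⟩ := reach.exists_isPath
  have hgood : ∀ k ≤ W.length, good (W.getVert k) := by
    intro k hk
    cases k with
    | zero => rw [SimpleGraph.Walk.getVert_zero]; exact g00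
    | succ k =>
      have := W.adj_getVert_succ (i := k) (by omega)
      rw [SimpleGraph.fromRel_adj] at this
      rcases this.2 with h | h
      · exact h.2.1
      · exact h.1
  have Ystep : ∀ x y, good x → good y → st x y → ∃ v : ZMod n,
      symmDiff (Y (p + n - x.1) (p + n + x.2)) (Y (p + n - y.1) (p + n + y.2)) = {v} := by
    rintro ⟨i, j⟩ ⟨i', j'⟩ ⟨h1, h2, -⟩ ⟨h3, h4, -⟩ h
    simp only at h1 h2 h3 h4
    have aux : ∀ (s : Finset ℕ) (x : ℕ), x ∉ s →
        Set.InjOn (fun k : ℕ => (k : ZMod n)) (insert x s : Finset ℕ) →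
        symmDiff (s.image (fun k : ℕ => (k : ZMod n)))
          ((insert x s).image (fun k : ℕ => (k : ZMod n))) = {(x : ZMod n)} := by
      intro s x hx hi
      have hnot : (x : ZMod n) ∉ s.image (fun k : ℕ => (k : ZMod n)) := by
        intro hm
        obtain ⟨y, hy, hxy⟩ := Finset.mem_image.1 hm
        have := hi (by simp [hy]) (by simp) hxy
        exact hx (this ▸ hy)
      rw [Finset.image_insert]
      ext z
      simp only [Finset.mem_symmDiff, Finset.mem_insert, Finset.mem_singleton]
      by_cases hz : z = (x : ZMod n)
      · subst hz; simp [hnot]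
      · simp [hz]
    rcases h with ⟨e1, e2⟩ | ⟨e1, e2⟩
    · simp only at e1 e2
      subst e1 e2
      have e : Finset.Ico (p + n - (i+1)) (p + n + j') =
        insert (p + n - (i+1)) (Finset.Ico (p + n - i) (p + n + j')) := by
        ext z; simp only [Finset.mem_Ico, Finset.mem_insert]; omega
      refine ⟨((p + n - (i+1) : ℕ) : ZMod n), ?_⟩
      simp only [Y]
      rw [e]
      apply aux
      · simp; omega
      · rw [← e]; exact inj _ _ (by omega)
    · simp only at e1 e2
      subst e1 e2
      have e : Finset.Ico (p + n - i') (p + n + (j+1)) =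
        insert (p + n + j) (Finset.Ico (p + n - i') (p + n + j)) := by
        ext z; simp only [Finset.mem_Ico, Finset.mem_insert]; omega
      refine ⟨((p + n + j : ℕ) : ZMod n), ?_⟩
      simp only [Y]
      rw [e]
      apply aux
      · simp
      · rw [← e]; exact inj _ _ (by omega)
  refine ⟨W.length, fun k => Y (p + n - (W.getVert k).1) (p + n + (W.getVert k).2),
    ?_, ?_, ?_, ?_, ?_⟩
  · simp [Y]
  · simp only [SimpleGraph.Walk.getVert_length]
    have e : p + n + B = p + n - A + n := by omega
    rw [e]; exact Yuniv _
  · intro k hk0 hkT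
    beta_reduce
    obtain ⟨g1, g2, -⟩ := hgood k hkT.le
    have ne0 : W.getVert k ≠ (0, 0) := by
      intro h
      have := hW.getVert_injOn (show k ∈ {i | i ≤ W.length} from hkT.le)
        (show 0 ∈ {i | i ≤ W.length} from Nat.zero_le _) (by rw [h, SimpleGraph.Walk.getVert_zero])
      omega
    have ne1 : W.getVert k ≠ (A, B) := by
      intro h
      have := hW.getVert_injOn (show k ∈ {i | i ≤ W.length} from hkT.le)
        (show W.length ∈ {i | i ≤ W.length} from le_refl W.length)
        (by rw [h, SimpleGraph.Walk.getVert_length])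
      omega
    generalize W.getVert k = x at *
    obtain ⟨i, j⟩ := x
    simp only [ne_eq, Prod.mk.injEq] at ne0 ne1 g1 g2
    have hc := Ycard (p + n - i) (p + n + j) (by omega)
    refine ⟨?_, ?_, ((p + n - i : ℕ) : ZMod n), i + j, ?_⟩
    · rw [← Finset.card_pos, hc]; omega
    · intro h
      rw [h, Finset.card_univ, ZMod.card] at hc
      omega
    · ext z
      simp only [Y, Finset.mem_image, Finset.mem_Ico, Finset.mem_range]
      constructor
      · rintro ⟨y, hy, rfl⟩
        refine ⟨y - (p + n - i), by omega, ?_⟩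
        rw [← Nat.cast_add]; congr 1; omega
      · rintro ⟨y, hy, rfl⟩
        refine ⟨(p + n - i) + y, by omega, ?_⟩
        rw [Nat.cast_add]
  · intro k hk
    have adj := W.adj_getVert_succ hk
    rw [SimpleGraph.fromRel_adj] at adj
    rcases adj.2 with ⟨h1, h2, h3⟩ | ⟨h1, h2, h3⟩
    · exact Ystep _ _ h1 h2 h3
    · obtain ⟨v, hv⟩ := Ystep _ _ h1 h2 h3
      exact ⟨v, by rw [symmDiff_comm]; exact hv⟩
  · intro k hk
    beta_reduce
    obtain ⟨g1, g2, g3⟩ := hgood k hk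
    generalize W.getVert k = x at *
    obtain ⟨i, j⟩ := x
    simp only at g1 g2 g3
    rw [Ydev _ _ (by omega) (by omega)]
    have e : S (p + n + j) = S (p + j) := by
      rw [← per (p + j)]; congr 1; omega
    rw [e, abs_sub_comm]
    exact g3
end

section
/- For every ε > 0 and integer B ≥ 1, there exist an integer K, a real δ > 0, and N such that the following holds: for every k×ℓ grid graph G with n = kℓ ≥ N vertices, and every partition ω of V(G) into nonempty parts each of size at most B and each inducing a connected subgraph of G, if the number of parts of ω is at least (1+ε)·n/B, then there exist at least δ·n distinct partitions of V(G) into nonempty parts of size at most B each inducing a connected subgraph of G, each having strictly fewer parts than ω, and each agreeing with ω on all vertices outside some set of at most K vertices that induces a connected subgraph of G. -/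
/-- The `k × ℓ` grid graph: vertices `{0,…,k-1} × {0,…,ℓ-1}`, two vertices adjacent
iff they differ by exactly 1 in one coordinate and agree in the other. -/
def gridGraph (k l : ℕ) : SimpleGraph (Fin k × Fin l) :=
  SimpleGraph.fromRel (fun a b =>
    (a.1 = b.1 ∧ a.2.val + 1 = b.2.val) ∨ (a.2 = b.2 ∧ a.1.val + 1 = b.1.val))

/-- `ω` is a partition of the vertex set of `G` into nonempty parts of size at most
`B`, each inducing a connected subgraph of `G`. -/
def IsBoundedConnPartition {V : Type*} (G : SimpleGraph V) (B : ℕ)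
    (ω : Finset (Finset V)) : Prop :=
  (∀ s ∈ ω, s.Nonempty) ∧
  (∀ v : V, ∃! s, s ∈ ω ∧ v ∈ s) ∧
  (∀ s ∈ ω, s.card ≤ B) ∧
  (∀ s ∈ ω, (G.induce (s : Set V)).Connected)

/-- Two partitions agree on all vertices outside `S`: the induced "same part"
relations coincide on the complement of `S`. -/
def AgreeOutside {V : Type*} (ω ω' : Finset (Finset V)) (S : Finset V) : Prop :=
  ∀ u v : V, u ∉ S → v ∉ S →
    ((∃ s ∈ ω, u ∈ s ∧ v ∈ s) ↔ (∃ s ∈ ω', u ∈ s ∧ v ∈ s))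

section GridAux

lemma ga_const {V α : Type*} {G : SimpleGraph V} {s : Set V} (h : (G.induce s).Connected)
    (τ : V → α) (hτ : ∀ u ∈ s, ∀ v ∈ s, G.Adj u v → τ u = τ v) :
    ∀ u ∈ s, ∀ v ∈ s, τ u = τ v := by
  intro u hu v hv
  obtain ⟨w⟩ := h.preconnected ⟨u, hu⟩ ⟨v, hv⟩
  have key : ∀ (a b : s), (G.induce s).Walk a b → τ a = τ b := by
    intro a b w
    induction w with
    | nil => rfl
    | cons hadj _ ih =>
      rw [← ih]
      exact hτ _ (Subtype.property _) _ (Subtype.property _) hadj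
  exact key _ _ w

lemma ga_conn {V : Type*} {G : SimpleGraph V} {s : Set V} (hne : s.Nonempty)
    (h : ∀ τ : V → Prop, (∀ u ∈ s, ∀ v ∈ s, G.Adj u v → (τ u ↔ τ v)) →
      ∀ u ∈ s, ∀ v ∈ s, τ u → τ v) : (G.induce s).Connected := by
  have : Nonempty s := hne.to_subtype
  refine ⟨fun u v => ?_⟩
  have := h (fun x => ∃ hx : x ∈ s, (G.induce s).Reachable u ⟨x, hx⟩) ?_ u u.2 v v.2
    ⟨u.2, SimpleGraph.Reachable.refl _⟩
  · obtain ⟨_, h⟩ := this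
    exact h
  · intro a ha b hb hab
    have hab' : (G.induce s).Adj ⟨a, ha⟩ ⟨b, hb⟩ := hab
    constructor
    · rintro ⟨_, h⟩
      exact ⟨hb, h.trans hab'.reachable⟩
    · rintro ⟨_, h⟩
      exact ⟨ha, h.trans hab'.symm.reachable⟩

/-- image of an interval along a path is connected -/
lemma ga_path {V : Type*} [DecidableEq V] {G : SimpleGraph V} (f : ℕ → V) (p q : ℕ) (hpq : p < q)
    (hf : ∀ t, p ≤ t → t + 1 < q → G.Adj (f t) (f (t+1))) :
    (G.induce (((Finset.Ico p q).image f : Finset V) : Set V)).Connected := by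
  apply ga_conn
  · exact ⟨f p, by simpa using ⟨p, ⟨le_refl _, hpq⟩, rfl⟩⟩
  · intro τ hτ
    have key : ∀ d, p + d < q → (τ (f (p + d)) ↔ τ (f p)) := by
      intro d
      induction d with
      | zero => intro _; rfl
      | succ d ih =>
        intro h
        rw [← ih (by omega)]
        symm
        apply hτ
        · simp only [Finset.coe_image, Finset.coe_Ico]
          exact ⟨p + d, ⟨by omega, by omega⟩, rfl⟩
        · simp only [Finset.coe_image, Finset.coe_Ico]
          exact ⟨p + (d+1), ⟨by omega, by omega⟩, rfl⟩
        · exact hf (p+d) (by omega) (by omega)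
    intro u hu v hv h
    simp only [Finset.coe_image, Finset.coe_Ico] at hu hv
    obtain ⟨a, ⟨ha1, ha2⟩, rfl⟩ := hu
    obtain ⟨b, ⟨hb1, hb2⟩, rfl⟩ := hv
    obtain ⟨a, rfl⟩ := Nat.exists_eq_add_of_le ha1
    obtain ⟨b, rfl⟩ := Nat.exists_eq_add_of_le hb1
    exact (key b hb2).2 ((key a ha2).1 h)

/-- partition of a subset -/
structure GAPart {V : Type*} (G : SimpleGraph V) (B : ℕ) (R : Finset V)
    (P : Finset (Finset V)) : Prop where
  ne : ∀ s ∈ P, s.Nonempty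
  sub : ∀ s ∈ P, s ⊆ R
  ex : ∀ v ∈ R, ∃ s ∈ P, v ∈ s
  uniq : ∀ s ∈ P, ∀ t ∈ P, ∀ v, v ∈ s → v ∈ t → s = t
  le : ∀ s ∈ P, s.card ≤ B
  conn : ∀ s ∈ P, (G.induce (s : Set V)).Connected

lemma ga_blocks {V : Type*} [DecidableEq V] {G : SimpleGraph V} (B : ℕ) (hB : 1 ≤ B)
    (f : ℕ → V) (m : ℕ) (hm : 0 < m)
    (hinj : ∀ a < m, ∀ b < m, f a = f b → a = b)
    (hf : ∀ t, t + 1 < m → G.Adj (f t) (f (t+1))) :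
    ∃ P, GAPart G B ((Finset.range m).image f) P ∧ P.card ≤ m / B + 1 := by
  have hb : ∀ b ≤ (m-1)/B, b * B < m := by
    intro b hb
    have := (Nat.le_div_iff_mul_le (by omega)).1 hb
    omega
  refine ⟨(Finset.range ((m-1)/B + 1)).image
    (fun b => (Finset.Ico (b*B) (min (b*B+B) m)).image f), ?_, ?_⟩
  · constructor
    · intro s hs
      simp only [Finset.mem_image, Finset.mem_range] at hs
      obtain ⟨b, hb', rfl⟩ := hs
      have := hb b (by omega)
      simp; omega
    · intro s hs
      simp only [Finset.mem_image, Finset.mem_range] at hs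
      obtain ⟨b, hb', rfl⟩ := hs
      apply Finset.image_subset_image
      intro x; simp
    · intro v hv
      simp only [Finset.mem_image, Finset.mem_range] at hv
      obtain ⟨a, ha, rfl⟩ := hv
      refine ⟨_, Finset.mem_image_of_mem _ (a := a / B) ?_, ?_⟩
      · simp only [Finset.mem_range]
        have : a / B ≤ (m-1)/B := Nat.div_le_div_right (by omega)
        omega
      · apply Finset.mem_image_of_mem
        have h1 := Nat.div_mul_le_self a B
        have h2 := Nat.lt_div_mul_add (a := a) (b := B) (by omega)
        simp; omega
    · intro s hs t ht v hvs hvt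
      simp only [Finset.mem_image, Finset.mem_range] at hs ht
      obtain ⟨b, hb', rfl⟩ := hs
      obtain ⟨c, hc', rfl⟩ := ht
      simp only [Finset.mem_image, Finset.mem_Ico, lt_min_iff] at hvs hvt
      obtain ⟨x, ⟨hx1, hx2, hx3⟩, rfl⟩ := hvs
      obtain ⟨y, ⟨hy1, hy2, hy3⟩, hxy⟩ := hvt
      have := hinj _ hy3 _ hx3 hxy
      subst this
      have e1 : y / B = b := by
        rw [Nat.div_eq_iff (by omega)]; omega
      have e2 : y / B = c := by
        rw [Nat.div_eq_iff (by omega)]; omega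
      rw [← e1, ← e2]
    · intro s hs
      simp only [Finset.mem_image, Finset.mem_range] at hs
      obtain ⟨b, hb', rfl⟩ := hs
      refine Finset.card_image_le.trans ?_
      simp; omega
    · intro s hs
      simp only [Finset.mem_image, Finset.mem_range] at hs
      obtain ⟨b, hb', rfl⟩ := hs
      have := hb b (by omega)
      apply ga_path
      · simp; omega
      · intro t _ ht
        apply hf; omega
  · refine Finset.card_image_le.trans ?_
    simp only [Finset.card_range]
    have : (m-1)/B ≤ m / B := Nat.div_le_div_right (by omega)
    omega

/-- surgery -/
noncomputable def gaSurg {V : Type*} [DecidableEq V] (ω : Finset (Finset V)) (R : Finset V)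
    (P : Finset (Finset V)) : Finset (Finset V) :=
  ω.filter (fun s => Disjoint s R) ∪
    (P ∪ ((ω.filter (fun s => ¬ Disjoint s R)).biUnion id \ R).image (fun v => {v}))

lemma ga_sub {V : Type*} {G : SimpleGraph V} {B : ℕ} {ω : Finset (Finset V)}
    (h : IsBoundedConnPartition G B ω) {s t : Finset V} (hs : s ∈ ω) (ht : t ∈ ω) {v : V}
    (h1 : v ∈ s) (h2 : v ∈ t) : s = t :=
  (h.2.1 v).unique ⟨hs, h1⟩ ⟨ht, h2⟩

lemma ga_surg_part {V : Type*} [DecidableEq V] {G : SimpleGraph V} {B : ℕ} (hB : 1 ≤ B)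
    {ω : Finset (Finset V)} (h : IsBoundedConnPartition G B ω) {R : Finset V}
    {P : Finset (Finset V)} (hP : GAPart G B R P) :
    IsBoundedConnPartition G B (gaSurg ω R P) := by
  have mem : ∀ s, s ∈ gaSurg ω R P ↔ (s ∈ ω ∧ Disjoint s R) ∨ s ∈ P ∨
      ∃ v, ((∃ t ∈ ω, ¬ Disjoint t R ∧ v ∈ t) ∧ v ∉ R) ∧ {v} = s := by
    intro s
    simp [gaSurg, and_assoc]
  refine ⟨?_, ?_, ?_, ?_⟩
  · intro s hs
    rcases (mem s).1 hs with h1 | h1 | ⟨v, _, rfl⟩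
    · exact h.1 s h1.1
    · exact hP.ne s h1
    · simp
  · intro v
    apply existsUnique_of_exists_of_unique
    · by_cases hv : v ∈ R
      · obtain ⟨s, hs, hvs⟩ := hP.ex v hv
        exact ⟨s, (mem s).2 (Or.inr (Or.inl hs)), hvs⟩
      · obtain ⟨s, ⟨hs, hvs⟩, _⟩ := h.2.1 v
        by_cases hd : Disjoint s R
        · exact ⟨s, (mem s).2 (Or.inl ⟨hs, hd⟩), hvs⟩
        · exact ⟨{v}, (mem _).2 (Or.inr (Or.inr ⟨v, ⟨⟨s, hs, hd, hvs⟩, hv⟩, rfl⟩)), by simp⟩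
    · rintro s t ⟨hs, hvs⟩ ⟨ht, hvt⟩
      rcases (mem s).1 hs with h1 | h1 | ⟨a, ⟨⟨s', hs', hd', ha'⟩, ha⟩, rfl⟩ <;>
      rcases (mem t).1 ht with h2 | h2 | ⟨b, ⟨⟨t', ht', hd'', hb'⟩, hb⟩, rfl⟩
      · exact ga_sub h h1.1 h2.1 hvs hvt
      · exact absurd (hP.sub t h2 hvt) (Finset.disjoint_left.1 h1.2 hvs)
      · simp only [Finset.mem_singleton] at hvt; subst hvt
        have := ga_sub h h1.1 ht' hvs hb'
        subst this
        exact absurd h1.2 hd''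
      · exact absurd (hP.sub s h1 hvs) (Finset.disjoint_left.1 h2.2 hvt)
      · exact hP.uniq s h1 t h2 v hvs hvt
      · simp only [Finset.mem_singleton] at hvt; subst hvt
        exact absurd (hP.sub s h1 hvs) hb
      · simp only [Finset.mem_singleton] at hvs; subst hvs
        have := ga_sub h h2.1 hs' hvt ha'
        subst this
        exact absurd h2.2 hd'
      · simp only [Finset.mem_singleton] at hvs; subst hvs
        exact absurd (hP.sub t h2 hvt) ha
      · simp only [Finset.mem_singleton] at hvs hvt; subst hvs; subst hvt; rfl
  · intro s hs
    rcases (mem s).1 hs with h1 | h1 | ⟨v, _, rfl⟩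
    · exact h.2.2.1 s h1.1
    · exact hP.le s h1
    · simpa using hB
  · intro s hs
    rcases (mem s).1 hs with h1 | h1 | ⟨v, _, rfl⟩
    · exact h.2.2.2 s h1.1
    · exact hP.conn s h1
    · apply ga_conn
      · simp
      · intro τ _ a ha b hb
        simp only [Finset.coe_singleton, Set.mem_singleton_iff] at ha hb
        subst ha; subst hb; exact id

lemma ga_surg_card {V : Type*} [DecidableEq V] {G : SimpleGraph V} {B : ℕ}
    {ω : Finset (Finset V)} (h : IsBoundedConnPartition G B ω) {R : Finset V}
    {P : Finset (Finset V)}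
    (hlt : P.card + B * (ω.filter (fun s => ¬ Disjoint s R ∧ ¬ s ⊆ R)).card <
      (ω.filter (fun s => s ⊆ R)).card) :
    (gaSurg ω R P).card < ω.card := by
  have h1 : ((ω.filter (fun s => ¬ Disjoint s R)).biUnion id \ R).card ≤
      (ω.filter (fun s => ¬ Disjoint s R ∧ ¬ s ⊆ R)).card * B := by
    refine (Finset.card_le_card (t :=
      (ω.filter (fun s => ¬ Disjoint s R ∧ ¬ s ⊆ R)).biUnion id) ?_).trans ?_
    · intro v hv
      simp only [Finset.mem_sdiff, Finset.mem_biUnion, Finset.mem_filter, id] at hv ⊢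
      obtain ⟨⟨s, ⟨hs, hd⟩, hvs⟩, hv⟩ := hv
      exact ⟨s, ⟨hs, hd, fun hh => hv (hh hvs)⟩, hvs⟩
    · apply Finset.card_biUnion_le_card_mul
      intro s hs
      exact h.2.2.1 s (Finset.mem_filter.1 hs).1
  have h2 : (ω.filter (fun s => s ⊆ R)).card ≤ (ω.filter (fun s => ¬ Disjoint s R)).card := by
    apply Finset.card_le_card
    intro s hs
    simp only [Finset.mem_filter] at hs ⊢
    refine ⟨hs.1, fun hd => ?_⟩
    obtain ⟨v, hv⟩ := h.1 s hs.1
    exact Finset.disjoint_left.1 hd hv (hs.2 hv)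
  have h3 := Finset.card_filter_add_card_filter_not (s := ω) (fun s => Disjoint s R)
  have h4 : (gaSurg ω R P).card ≤ (ω.filter (fun s => Disjoint s R)).card +
      (P.card + ((ω.filter (fun s => ¬ Disjoint s R)).biUnion id \ R).card) := by
    unfold gaSurg
    refine (Finset.card_union_le _ _).trans ?_
    gcongr
    refine (Finset.card_union_le _ _).trans ?_
    gcongr
    exact Finset.card_image_le
  rw [mul_comm] at h1
  omega

lemma ga_surg_filter {V : Type*} [DecidableEq V] {G : SimpleGraph V} {B : ℕ}
    {ω : Finset (Finset V)} (h : IsBoundedConnPartition G B ω) {R : Finset V}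
    {P : Finset (Finset V)} :
    (gaSurg ω R P).filter (fun s => s ⊆ R) ⊆ P := by
  intro s hs
  simp only [gaSurg, Finset.mem_filter, Finset.mem_union, Finset.mem_image,
    Finset.mem_sdiff] at hs
  obtain ⟨(⟨h1, h2⟩ | h1 | ⟨v, ⟨_, h2⟩, rfl⟩), h3⟩ := hs
  · obtain ⟨v, hv⟩ := h.1 s h1
    exact absurd (h3 hv) (Finset.disjoint_left.1 h2 hv)
  · exact h1
  · exact absurd (h3 (Finset.mem_singleton_self v)) h2

lemma ga_surg_agree {V : Type*} [DecidableEq V]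
    {ω : Finset (Finset V)} {R : Finset V} {G : SimpleGraph V} {B : ℕ}
    (h : IsBoundedConnPartition G B ω) 
    {P : Finset (Finset V)} (hP : GAPart G B R P) :
    AgreeOutside ω (gaSurg ω R P) ((ω.filter (fun s => ¬ Disjoint s R)).biUnion id) := by
  intro u v hu hv
  simp only [Finset.mem_biUnion, Finset.mem_filter, id, not_exists, not_and, and_imp] at hu hv
  constructor
  · rintro ⟨s, hs, hus, hvs⟩
    refine ⟨s, ?_, hus, hvs⟩
    simp only [gaSurg, Finset.mem_filter, Finset.mem_union]
    left
    refine ⟨hs, ?_⟩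
    by_contra hd
    exact hu s hs hd hus
  · rintro ⟨s, hs, hus, hvs⟩
    simp only [gaSurg, Finset.mem_filter, Finset.mem_union, Finset.mem_image, Finset.mem_biUnion,
      Finset.mem_sdiff, id] at hs
    rcases hs with ⟨h1, _⟩ | h1 | ⟨w, ⟨⟨t, ⟨ht, hd⟩, hwt⟩, _⟩, rfl⟩
    · exact ⟨s, h1, hus, hvs⟩
    · have hR := hP.sub s h1 hus
      obtain ⟨t, ⟨ht, hut⟩, _⟩ := h.2.1 u
      exact absurd hut (hu t ht (fun hd => Finset.disjoint_left.1 hd hut hR))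
    · simp only [Finset.mem_singleton] at hus; subst hus
      exact absurd hwt (hu t ht hd)

lemma ga_S {V : Type*} [DecidableEq V] {G : SimpleGraph V} {B : ℕ}
    {ω : Finset (Finset V)} (h : IsBoundedConnPartition G B ω) {R : Finset V}
    (hne : R.Nonempty) (hc : (G.induce (R : Set V)).Connected) :
    (G.induce (((ω.filter (fun s => ¬ Disjoint s R)).biUnion id : Finset V) : Set V)).Connected ∧
    ((ω.filter (fun s => ¬ Disjoint s R)).biUnion id).card ≤ R.card * B := by
  have hRS : ∀ v ∈ R, v ∈ (ω.filter (fun s => ¬ Disjoint s R)).biUnion id := by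
    intro v hv
    obtain ⟨t, ⟨ht, hvt⟩, _⟩ := h.2.1 v
    simp only [Finset.mem_biUnion, Finset.mem_filter, id]
    exact ⟨t, ⟨ht, fun hd => Finset.disjoint_left.1 hd hvt hv⟩, hvt⟩
  constructor
  · obtain ⟨r, hr⟩ := hne
    apply ga_conn
    · exact ⟨r, hRS r hr⟩
    · intro τ hτ
      have key : ∀ u ∈ (ω.filter (fun s => ¬ Disjoint s R)).biUnion id, τ u = τ r := by
        intro u hu
        have hu' := hu
        simp only [Finset.mem_biUnion, Finset.mem_filter, id] at hu'
        obtain ⟨s, ⟨hs, hd⟩, hus⟩ := hu'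
        have hd' := hd
        rw [Finset.not_disjoint_iff] at hd'
        obtain ⟨w, hws, hwR⟩ := hd'
        have hsS : ∀ x ∈ s, x ∈ (ω.filter (fun s => ¬ Disjoint s R)).biUnion id := by
          intro x hx
          simp only [Finset.mem_biUnion, Finset.mem_filter, id]
          exact ⟨s, ⟨hs, hd⟩, hx⟩
        have e1 : τ u = τ w := ga_const (h.2.2.2 s hs) τ
          (fun a ha b hb hab => propext (hτ a (hsS a ha) b (hsS b hb) hab)) u hus w hws
        have e2 : τ w = τ r := ga_const hc τ
          (fun a ha b hb hab => propext (hτ a (hRS a ha) b (hRS b hb) hab)) w hwR r hr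
        rw [e1, e2]
      intro u hu v hv hh
      rw [key v hv, ← key u hu]
      exact hh
  · refine (Finset.card_biUnion_le_card_mul _ _ B ?_).trans ?_
    · intro s hs
      exact h.2.2.1 s (Finset.mem_filter.1 hs).1
    · gcongr
      have : Nonempty V := ⟨hne.choose⟩
      choose! g hg using fun (s : Finset V) (hs : ¬ Disjoint s R) => Finset.not_disjoint_iff.1 hs
      apply Finset.card_le_card_of_injOn g
      · intro s hs
        exact (hg s (Finset.mem_filter.1 hs).2).2
      · intro s hs t ht hst
        have hs := Finset.mem_filter.1 hs
        have ht := Finset.mem_filter.1 ht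
        have h1 := (hg s hs.2).1
        have h2 := (hg t ht.2).1
        rw [← hst] at h2
        exact ga_sub h hs.1 ht.1 h1 h2

/-- tiles -/
def gaTile (k l M : ℕ) (a : ℕ × ℕ) : Finset (Fin k × Fin l) :=
  Finset.univ.filter (fun v => (v.1.val / M, v.2.val / M) = a)

def gaIdx (k l M : ℕ) : Finset (ℕ × ℕ) :=
  Finset.range ((k-1)/M+1) ×ˢ Finset.range ((l-1)/M+1)

lemma ga_adj {k l : ℕ} (u v : Fin k × Fin l) : (gridGraph k l).Adj u v ↔
    (u.1.val = v.1.val ∧ (u.2.val + 1 = v.2.val ∨ v.2.val + 1 = u.2.val)) ∨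
    (u.2.val = v.2.val ∧ (u.1.val + 1 = v.1.val ∨ v.1.val + 1 = u.1.val)) := by
  obtain ⟨⟨a, ha⟩, ⟨b, hb⟩⟩ := u
  obtain ⟨⟨c, hc⟩, ⟨d, hd⟩⟩ := v
  simp only [gridGraph, SimpleGraph.fromRel_adj, ne_eq, Prod.mk.injEq, Fin.mk.injEq]
  omega

lemma ga_snake (k l M : ℕ) (hk : 0 < k) (hl : 0 < l) (hM : 0 < M) (a : ℕ × ℕ)
    (ha : a ∈ gaIdx k l M) :
    ∃ (f : ℕ → Fin k × Fin l) (m : ℕ), 0 < m ∧ (Finset.range m).image f = gaTile k l M a ∧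
      (∀ x < m, ∀ y < m, f x = f y → x = y) ∧
      (∀ t, t + 1 < m → (gridGraph k l).Adj (f t) (f (t+1))) := by
  obtain ⟨a, b⟩ := a
  simp only [gaIdx, Finset.mem_product, Finset.mem_range] at ha
  have h1 : a * M ≤ k - 1 := (Nat.le_div_iff_mul_le hM).1 (by omega)
  have h2 : b * M ≤ l - 1 := (Nat.le_div_iff_mul_le hM).1 (by omega)
  set h := min M (k - a * M) with hh
  set w := min M (l - b * M) with hw
  have hh0 : 0 < h := by omega
  have hw0 : 0 < w := by omega
  have hdiv : ∀ x < h * w, x / w < h := fun x hx => by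
    rwa [Nat.div_lt_iff_lt_mul hw0]
  have hmod : ∀ x, x % w < w := fun x => Nat.mod_lt _ hw0
  let c : ℕ → ℕ := fun t => if (t / w) % 2 = 0 then t % w else w - 1 - t % w
  have hc : ∀ t, c t < w := by
    intro t
    have := hmod t
    simp only [c]; split_ifs <;> omega
  let f : ℕ → Fin k × Fin l := fun t =>
    (⟨min (k-1) (a * M + t / w), by omega⟩, ⟨b * M + c t, by have := hc t; omega⟩)
  have f1 : ∀ t < h * w, (f t).1.val = a * M + t / w := by
    intro t ht
    have := hdiv t ht
    simp only [f]; omega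
  have f2 : ∀ t, (f t).2.val = b * M + c t := fun t => rfl
  refine ⟨f, h * w, by positivity, ?_, ?_, ?_⟩
  · ext ⟨⟨i, hi⟩, ⟨j, hj⟩⟩
    simp only [Finset.mem_image, Finset.mem_range, gaTile, Finset.mem_filter, Finset.mem_univ,
      true_and, Prod.mk.injEq]
    rw [Nat.div_eq_iff hM, Nat.div_eq_iff hM]
    constructor
    · rintro ⟨t, ht, e⟩
      have e1 := f1 t ht
      have e2 := f2 t
      rw [e] at e1 e2
      simp only at e1 e2
      have h3 := hc t
      have h4 := hdiv t ht
      generalize t / w = z at *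
      omega
    · rintro ⟨⟨hi1, hi2⟩, ⟨hj1, hj2⟩⟩
      have hr : i - a * M < h := by omega
      have hs : j - b * M < w := by omega
      set r := i - a * M with hr'
      set s := j - b * M with hs'
      have key : ∀ z < w, r * w + z < h * w ∧ (r * w + z) / w = r ∧ (r * w + z) % w = z := by
        intro z hz
        refine ⟨?_, ?_, ?_⟩
        · calc r * w + z < r * w + w := by omega
            _ = (r + 1) * w := by ring
            _ ≤ h * w := Nat.mul_le_mul_right _ hr
        · rw [mul_comm, Nat.mul_add_div hw0, Nat.div_eq_of_lt hz]; rfl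
        · rw [mul_comm, Nat.mul_add_mod, Nat.mod_eq_of_lt hz]
      obtain ⟨k1, k2, k3⟩ := key (if r % 2 = 0 then s else w - 1 - s) (by split_ifs <;> omega)
      refine ⟨_, k1, ?_⟩
      have e1 := f1 _ k1
      have e2 := f2 (r * w + (if r % 2 = 0 then s else w - 1 - s))
      simp only [c, k2, k3] at e1 e2
      apply Prod.ext <;> apply Fin.ext
      · rw [e1]; simp only; omega
      · rw [e2]; simp only; split_ifs <;> omega
  · intro x hx y hy hxy
    have e1 := f1 x hx
    have e1' := f1 y hy
    have e2 := f2 x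
    have e2' := f2 y
    rw [hxy] at e1 e2
    have d : x / w = y / w := by omega
    have cc : c x = c y := by omega
    have m1 := hmod x
    have m2 := hmod y
    have m : x % w = y % w := by
      simp only [c, d] at cc
      split_ifs at cc <;> omega
    rw [← Nat.div_add_mod x w, ← Nat.div_add_mod y w, d, m]
  · intro t ht
    rw [ga_adj, f1 _ ht, f1 t (by omega), f2, f2]
    have m1 := hmod t
    have dm := Nat.div_add_mod t w
    by_cases hlast : t % w + 1 < w
    · have q : (t + 1) / w = t / w := by
        rw [Nat.div_eq_iff hw0, mul_comm]; omega
      have r : (t + 1) % w = t % w + 1 := by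
        have := Nat.div_add_mod (t+1) w
        rw [q] at this; omega
      left
      simp only [c, q, r]
      refine ⟨trivial, ?_⟩
      split_ifs <;> omega
    · have q : (t + 1) / w = t / w + 1 := by
        rw [Nat.div_eq_iff hw0, mul_comm, mul_add]; omega
      have r : (t + 1) % w = 0 := by
        have := Nat.div_add_mod (t+1) w
        rw [q, mul_add] at this; omega
      right
      simp only [c, q, r]
      have hpar : (t / w + 1) % 2 = 0 ↔ ¬ (t / w) % 2 = 0 := by omega
      simp only [hpar]
      refine ⟨?_, Or.inl (by ring)⟩
      split_ifs <;> omega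

lemma ga_tile_part (k l M B : ℕ) (hk : 0 < k) (hl : 0 < l) (hM : 0 < M) (hB : 1 ≤ B)
    (a : ℕ × ℕ) (ha : a ∈ gaIdx k l M) :
    (gaTile k l M a).Nonempty ∧
    ((gridGraph k l).induce (gaTile k l M a : Set (Fin k × Fin l))).Connected ∧
    ∃ P, GAPart (gridGraph k l) B (gaTile k l M a) P ∧
      P.card ≤ (gaTile k l M a).card / B + 1 := by
  obtain ⟨f, m, hm, him, hinj, hadj⟩ := ga_snake k l M hk hl hM a ha
  have hcard : (gaTile k l M a).card = m := by
    rw [← him, Finset.card_image_of_injOn, Finset.card_range]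
    intro x hx y hy
    simp only [Finset.coe_range, Set.mem_Iio] at hx hy
    exact hinj x hx y hy
  rw [hcard, ← him]
  refine ⟨?_, ?_, ga_blocks B hB f m hm hinj hadj⟩
  · simp; omega
  · rw [Finset.range_eq_Ico]
    exact ga_path f 0 m hm (fun t _ => hadj t)

def gaBd (k l M : ℕ) : Finset (Fin k × Fin l) :=
  Finset.univ.filter (fun v => (M ∣ v.1.val ∧ 0 < v.1.val) ∨ (M ∣ v.2.val ∧ 0 < v.2.val))

def gaD (k l M : ℕ) : ℕ := ((k-1)/M) * l + k * ((l-1)/M)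

lemma ga_mult (k M : ℕ) (hM : 0 < M) :
    (Finset.univ.filter (fun i : Fin k => M ∣ i.val ∧ 0 < i.val)).card ≤ (k-1)/M := by
  have : (Finset.univ.filter (fun i : Fin k => M ∣ i.val ∧ 0 < i.val)).card ≤
      (Finset.Icc 1 ((k-1)/M)).card := by
    apply Finset.card_le_card_of_injOn (fun i => i.val / M)
    · intro i hi
      have hik := i.2
      simp only [Finset.coe_filter, Finset.mem_univ, true_and, Set.mem_ofPred_eq] at hi
      simp only [Finset.coe_Icc, Set.mem_Icc]
      exact ⟨Nat.div_pos (Nat.le_of_dvd hi.2 hi.1) hM, Nat.div_le_div_right (by omega)⟩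
    · intro i hi j hj hij
      simp only [Finset.coe_filter, Finset.mem_univ, true_and, Set.mem_ofPred_eq] at hi hj
      simp only at hij
      apply Fin.ext
      rw [← Nat.div_mul_cancel hi.1, ← Nat.div_mul_cancel hj.1, hij]
  simpa using this

lemma ga_Bd_card (k l M : ℕ) (hM : 0 < M) : (gaBd k l M).card ≤ gaD k l M := by
  have h : gaBd k l M ⊆
      ((Finset.univ.filter (fun i : Fin k => M ∣ i.val ∧ 0 < i.val)) ×ˢ (Finset.univ : Finset (Fin l)))
      ∪ ((Finset.univ : Finset (Fin k)) ×ˢ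
        (Finset.univ.filter (fun i : Fin l => M ∣ i.val ∧ 0 < i.val))) := by
    intro v hv
    simpa [gaBd] using hv
  refine (Finset.card_le_card h).trans ((Finset.card_union_le _ _).trans ?_)
  simp only [Finset.card_product, Finset.card_univ, Fintype.card_fin, gaD]
  gcongr
  · exact ga_mult k M hM
  · exact ga_mult l M hM

lemma ga_D_le (k l M : ℕ) : M * gaD k l M ≤ 2 * (k * l) := by
  have h1 : M * ((k-1)/M) ≤ k := (Nat.mul_div_le _ _).trans (by omega)
  have h2 : M * ((l-1)/M) ≤ l := (Nat.mul_div_le _ _).trans (by omega)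
  unfold gaD
  nlinarith [Nat.mul_le_mul_right l h1, Nat.mul_le_mul_left k h2]

lemma ga_idx_card (k l M : ℕ) (hk : 0 < k) (hl : 0 < l) :
    (gaIdx k l M).card ≤ gaD k l M + 1 := by
  simp only [gaIdx, Finset.card_product, Finset.card_range, gaD]
  have h2 : (l-1)/M + 1 ≤ l := by
    have := Nat.div_le_self (l-1) M
    omega
  have h3 := Nat.mul_le_mul_left ((k-1)/M) h2
  have h4 := Nat.mul_le_mul_right ((l-1)/M) (show 1 ≤ k from hk)
  nlinarith

lemma ga_tau_adj (k l M : ℕ) (hM : 0 < M) (u v : Fin k × Fin l) (hu : u ∉ gaBd k l M)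
    (hv : v ∉ gaBd k l M) (h : (gridGraph k l).Adj u v) :
    (u.1.val / M, u.2.val / M) = (v.1.val / M, v.2.val / M) := by
  rw [ga_adj] at h
  simp only [gaBd, Finset.mem_filter, Finset.mem_univ, true_and, not_or, not_and] at hu hv
  have key : ∀ x y : ℕ, (M ∣ y → ¬ 0 < y) → x + 1 = y → x / M = y / M := by
    rintro x y hy rfl
    rw [Nat.succ_div_of_not_dvd]
    intro hd
    exact hy hd (by omega)
  rcases h with ⟨e, h | h⟩ | ⟨e, h | h⟩
  · rw [e, key _ _ hv.2 h]
  · rw [e, key _ _ hu.2 h]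
  · rw [e, key _ _ hv.1 h]
  · rw [e, key _ _ hu.1 h]

lemma ga_tile_card (k l M : ℕ) (hM : 0 < M) (a : ℕ × ℕ) : (gaTile k l M a).card ≤ M * M := by
  have : (gaTile k l M a).card ≤
      ((Finset.Ico (a.1 * M) (a.1 * M + M)) ×ˢ (Finset.Ico (a.2 * M) (a.2 * M + M))).card := by
    apply Finset.card_le_card_of_injOn (fun v => (v.1.val, v.2.val))
    · intro v hv
      obtain ⟨a, b⟩ := a
      simp only [gaTile, Finset.coe_filter, Finset.mem_univ, true_and, Set.mem_ofPred_eq,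
        Prod.mk.injEq, Nat.div_eq_iff hM] at hv
      simp only [Finset.coe_product, Finset.coe_Ico, Set.mem_prod, Set.mem_Ico]
      omega
    · intro u _ v _ h
      simp only [Prod.mk.injEq] at h
      exact Prod.ext (Fin.ext h.1) (Fin.ext h.2)
  simpa using this

lemma ga_tau_mem (k l M : ℕ) (v : Fin k × Fin l) :
    (v.1.val / M, v.2.val / M) ∈ gaIdx k l M := by
  have h1 := v.1.2
  have h2 := v.2.2
  simp only [gaIdx, Finset.mem_product, Finset.mem_range, Nat.lt_succ_iff]
  exact ⟨Nat.div_le_div_right (by omega), Nat.div_le_div_right (by omega)⟩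

/-- counting -/
lemma ga_count (k l M B : ℕ) (hM : 0 < M) (hk : 0 < k) (hl : 0 < l)
    (ω : Finset (Finset (Fin k × Fin l)))
    (h : IsBoundedConnPartition (gridGraph k l) B ω) (p : ℕ × ℕ → ℕ)
    (hp : ∀ a ∈ gaIdx k l M, p a ≤ (gaTile k l M a).card / B + 1) :
    B * ω.card ≤ B * (M * M * ((gaIdx k l M).filter (fun a =>
        p a + B * (ω.filter (fun s => ¬ Disjoint s (gaTile k l M a) ∧ ¬ s ⊆ gaTile k l M a)).card <
          (ω.filter (fun s => s ⊆ gaTile k l M a)).card)).card)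
      + k * l + B * ((B * B + 2) * gaD k l M + 1) := by
  classical
  have : Nonempty (Fin k × Fin l) := ⟨(⟨0, hk⟩, ⟨0, hl⟩)⟩
  set C := ω.filter (fun s => ∃ v ∈ s, v ∈ gaBd k l M) with hC
  set I := fun a => (ω.filter (fun s => s ⊆ gaTile k l M a)).card with hI
  set X := fun a =>
    (ω.filter (fun s => ¬ Disjoint s (gaTile k l M a) ∧ ¬ s ⊆ gaTile k l M a)).card with hX
  have mt : ∀ a v, v ∈ gaTile k l M a ↔ (v.1.val / M, v.2.val / M) = a := by
    intro a v; simp [gaTile]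
  have hconst : ∀ s ∈ ω, s ∉ C → ∀ u ∈ s, ∀ v ∈ s,
      (u.1.val / M, u.2.val / M) = (v.1.val / M, v.2.val / M) := by
    intro s hs hsC
    have hno : ∀ v ∈ s, v ∉ gaBd k l M := by
      intro v hv hb
      exact hsC (Finset.mem_filter.2 ⟨hs, v, hv, hb⟩)
    exact ga_const (h.2.2.2 s hs) (fun v => (v.1.val / M, v.2.val / M))
      (fun u hu v hv => ga_tau_adj k l M hM u v (hno u hu) (hno v hv))
  have c1 : C.card ≤ gaD k l M := by
    refine le_trans ?_ (ga_Bd_card k l M hM)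
    choose! g hg using fun (s : Finset (Fin k × Fin l)) (hs : s ∈ C) => (Finset.mem_filter.1 hs).2
    apply Finset.card_le_card_of_injOn g
    · intro s hs
      exact (hg s hs).2
    · intro s hs t ht hst
      have h1 := (hg s hs).1
      have h2 := (hg t ht).1
      rw [← hst] at h2
      exact ga_sub h (Finset.mem_filter.1 hs).1 (Finset.mem_filter.1 ht).1 h1 h2
  have c2 : ω.card ≤ ∑ a ∈ gaIdx k l M, I a + C.card := by
    have : ω ⊆ (gaIdx k l M).biUnion (fun a => ω.filter (fun s => s ⊆ gaTile k l M a)) ∪ C := by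
      intro s hs
      by_cases hsC : s ∈ C
      · exact Finset.mem_union_right _ hsC
      · apply Finset.mem_union_left
        obtain ⟨v, hv⟩ := h.1 s hs
        refine Finset.mem_biUnion.2 ⟨_, ga_tau_mem k l M v, Finset.mem_filter.2 ⟨hs, ?_⟩⟩
        intro u hu
        rw [mt]
        exact hconst s hs hsC u hu v hv
    refine (Finset.card_le_card this).trans ((Finset.card_union_le _ _).trans ?_)
    gcongr
    exact Finset.card_biUnion_le
  have c3 : ∑ a ∈ gaIdx k l M, X a ≤ C.card * B := by
    have e : ∀ a ∈ gaIdx k l M, X a ≤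
        (C.filter (fun s => a ∈ s.image (fun v => (v.1.val / M, v.2.val / M)))).card := by
      intro a _
      apply Finset.card_le_card
      intro s hs
      obtain ⟨hs, hd, hns⟩ := Finset.mem_filter.1 hs
      obtain ⟨v, hv, hva⟩ := Finset.not_disjoint_iff.1 hd
      rw [mt] at hva
      refine Finset.mem_filter.2 ⟨?_, Finset.mem_image.2 ⟨v, hv, hva⟩⟩
      by_contra hsC
      apply hns
      intro u hu
      rw [mt, ← hva]
      exact hconst s hs hsC u hu v hv
    refine (Finset.sum_le_sum e).trans ?_
    simp only [Finset.card_filter]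
    rw [Finset.sum_comm, ← smul_eq_mul]
    apply Finset.sum_le_card_nsmul
    intro s hs
    rw [← Finset.card_filter]
    refine le_trans (Finset.card_le_card (t := s.image (fun v => (v.1.val / M, v.2.val / M))) ?_)
      (Finset.card_image_le.trans (h.2.2.1 s (Finset.mem_filter.1 hs).1))
    intro a ha
    exact (Finset.mem_filter.1 ha).2
  have c4 : ∑ a ∈ gaIdx k l M, (gaTile k l M a).card ≤ k * l := by
    rw [← Finset.card_biUnion]
    · refine (Finset.card_le_univ _).trans ?_
      simp
    · intro a _ b _ hab
      refine Finset.disjoint_left.2 ?_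
      intro v hv hv'
      rw [mt] at hv hv'
      exact hab (hv.symm.trans hv')
  have c5 : ∀ a, I a ≤ M * M := by
    intro a
    refine le_trans ?_ (ga_tile_card k l M hM a)
    choose! g hg using h.1
    apply Finset.card_le_card_of_injOn g
    · intro s hs
      have hs := Finset.mem_filter.1 hs
      exact hs.2 (hg s hs.1)
    · intro s hs t ht hst
      have hs := (Finset.mem_filter.1 hs).1
      have ht := (Finset.mem_filter.1 ht).1
      have h1 := (hg s hs)
      have h2 := (hg t ht)
      rw [← hst] at h2
      exact ga_sub h hs ht h1 h2
  have c6 := ga_idx_card k l M hk hl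
  have c7 : ∀ a ∈ gaIdx k l M, B * I a ≤ B * (M * M * (if p a + B * X a < I a then 1 else 0))
      + ((gaTile k l M a).card + B * (1 + B * X a)) := by
    intro a ha
    split_ifs with hlt
    · have := Nat.mul_le_mul_left B (c5 a)
      rw [mul_one]; omega
    · have h1 := hp a ha
      have h2 : I a ≤ (gaTile k l M a).card / B + (1 + B * X a) := by omega
      have h3 := Nat.mul_le_mul_left B h2
      have h4 := Nat.mul_div_le (gaTile k l M a).card B
      rw [mul_add] at h3
      omega
  have c8 := Finset.sum_le_sum c7
  simp only [Finset.sum_add_distrib, ← Finset.mul_sum, ← Finset.card_filter, Finset.sum_const,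
    smul_eq_mul, mul_one] at c8
  have c9 := Nat.mul_le_mul_left B c2
  have c10 := Nat.mul_le_mul_left B (Nat.mul_le_mul_left B c3)
  have c11 := Nat.mul_le_mul_left B (Nat.mul_le_mul_left B (Nat.mul_le_mul_right B c1))
  have c12 := Nat.mul_le_mul_left B c6
  have c13 := Nat.mul_le_mul_left B c1
  simp only [mul_add] at c8 c9 c10 c11 c12 c13 ⊢
  nlinarith

end GridAux

/-- Proposition 3: rectangular grids are `(B,1)`-partitionable.  For every `ε > 0` and
`B`, there are `K`, `δ > 0`, `N` such that any `B`-bounded connected partition of a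
grid on `n = kℓ ≥ N` vertices with at least `(1+ε)·n/B` parts admits at least `δ·n`
distinct `B`-bounded connected partitions with strictly fewer parts, each agreeing
with it outside a connected set of at most `K` vertices. -/
theorem grid_partitionable (ε : ℝ) (hε : 0 < ε) (B : ℕ) (hB : 1 ≤ B) :
    ∃ (K : ℕ) (δ : ℝ), 0 < δ ∧ ∃ N : ℕ,
      ∀ k l : ℕ, N ≤ k * l →
      ∀ ω : Finset (Finset (Fin k × Fin l)),
        IsBoundedConnPartition (gridGraph k l) B ω →
        (1 + ε) * ((k * l : ℕ) : ℝ) / (B : ℝ) ≤ (ω.card : ℝ) →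
        ∃ W : Finset (Finset (Finset (Fin k × Fin l))),
          δ * ((k * l : ℕ) : ℝ) ≤ (W.card : ℝ) ∧
          ∀ ω' ∈ W, IsBoundedConnPartition (gridGraph k l) B ω' ∧
            ω'.card < ω.card ∧
            ∃ S : Finset (Fin k × Fin l), S.card ≤ K ∧
              ((gridGraph k l).induce (S : Set (Fin k × Fin l))).Connected ∧
              AgreeOutside ω ω' S := by
  classical
  have hBr : (0:ℝ) < B := by exact_mod_cast hB
  obtain ⟨M, hM⟩ := exists_nat_gt (max 1 (8 * ((B:ℝ) * B + 2) * B / ε))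
  obtain ⟨N, hN⟩ := exists_nat_gt (max 1 (4 * (B:ℝ) / ε))
  have hM1 : (1:ℝ) < M := (le_max_left _ _).trans_lt hM
  have hM2 := (le_max_right _ _).trans_lt hM
  have hN1 : (1:ℝ) < N := (le_max_left _ _).trans_lt hN
  have hN2 := (le_max_right _ _).trans_lt hN
  have hM0 : 0 < M := by
    have : (0:ℝ) < M := by linarith
    exact_mod_cast this
  have hN0 : 0 < N := by
    have : (0:ℝ) < N := by linarith
    exact_mod_cast this
  refine ⟨M * M * B, ε / (2 * B * (M * M)), by positivity, N, ?_⟩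
  intro k l hkl ω h hω
  have hk : 0 < k := Nat.pos_of_ne_zero (by rintro rfl; omega)
  have hl : 0 < l := Nat.pos_of_ne_zero (by rintro rfl; omega)
  have hex := fun a ha => ga_tile_part k l M B hk hl hM0 hB a ha
  choose! hne hcon P hP hPc using hex
  have hcount := ga_count k l M B hM0 hk hl ω h (fun a => (P a).card) hPc
  set Gd := (gaIdx k l M).filter (fun a =>
        (P a).card +
          B * (ω.filter (fun s => ¬ Disjoint s (gaTile k l M a) ∧ ¬ s ⊆ gaTile k l M a)).card <
          (ω.filter (fun s => s ⊆ gaTile k l M a)).card) with hGd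
  refine ⟨Gd.image (fun a => gaSurg ω (gaTile k l M a) (P a)), ?_, ?_⟩
  · rw [Finset.card_image_of_injOn]
    · have hD := ga_D_le k l M
      have hcount' : (B:ℝ) * ω.card ≤ B * (M * M * Gd.card) + ((k * l : ℕ) : ℝ)
          + B * ((B * B + 2) * gaD k l M + 1) := by exact_mod_cast hcount
      have hD' : (M:ℝ) * gaD k l M ≤ 2 * ((k * l : ℕ) : ℝ) := by exact_mod_cast hD
      have hn : (N:ℝ) ≤ ((k * l : ℕ) : ℝ) := by exact_mod_cast hkl
      generalize ((k * l : ℕ) : ℝ) = n at *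
      generalize (gaD k l M : ℝ) = D at *
      generalize (Gd.card : ℝ) = g at *
      generalize (ω.card : ℝ) = c at *
      rw [div_le_iff₀ hBr] at hω
      rw [div_lt_iff₀ hε] at hM2 hN2
      rw [div_mul_eq_mul_div, div_le_iff₀ (by positivity)]
      have hMr : (0:ℝ) < M := by linarith
      have hn0 : 0 < n := by linarith
      have k1 : B * ((B * B + 2) * D) ≤ ε * n / 4 := by
        have : (M:ℝ) * (B * ((B * B + 2) * D)) ≤ M * (ε * n / 4) := by
          calc (M:ℝ) * (B * ((B * B + 2) * D)) = (B * (B * B + 2)) * (M * D) := by ring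
            _ ≤ (B * (B * B + 2)) * (2 * n) := by gcongr
            _ = (8 * ((B:ℝ) * B + 2) * B) * (n / 4) := by ring
            _ ≤ (M * ε) * (n / 4) := by gcongr
            _ = _ := by ring
        exact le_of_mul_le_mul_left this hMr
      have k2 : (B:ℝ) ≤ ε * n / 4 := by
        have : (N:ℝ) * ε ≤ n * ε := by gcongr
        linarith
      nlinarith
    · intro a ha b hb hab
      by_contra hne'
      have ha' := (Finset.mem_filter.1 ha).2
      simp only at hab
      have hsub : ω.filter (fun s => s ⊆ gaTile k l M a) ⊆
          (gaSurg ω (gaTile k l M b) (P b)).filter (fun s => s ⊆ gaTile k l M a) := by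
        intro s hs
        obtain ⟨hs, hsa⟩ := Finset.mem_filter.1 hs
        refine Finset.mem_filter.2 ⟨?_, hsa⟩
        refine Finset.mem_union_left _ (Finset.mem_filter.2 ⟨hs, ?_⟩)
        rw [Finset.disjoint_left]
        intro v hv hvb
        have := hsa hv
        simp only [gaTile, Finset.mem_filter, Finset.mem_univ, true_and] at this hvb
        exact hne' (this.symm.trans hvb)
      rw [← hab] at hsub
      have := Finset.card_le_card (hsub.trans (ga_surg_filter h))
      omega
  · intro ω' hω'
    obtain ⟨a, ha, rfl⟩ := Finset.mem_image.1 hω'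
    obtain ⟨ha, hlt⟩ := Finset.mem_filter.1 ha
    obtain ⟨s1, s2⟩ := ga_S h (hne a ha) (hcon a ha)
    refine ⟨ga_surg_part hB h (hP a ha), ga_surg_card h hlt, _, ?_, s1,
      ga_surg_agree h (hP a ha)⟩
    exact s2.trans (Nat.mul_le_mul_right _ (ga_tile_card k l M hM0 a))
end

section
/- Let k, ℓ ≥ 3 be integers and let G be the k×ℓ grid graph. Let D be the set of boundary vertices of G, i.e., vertices (i,j) with i ∈ {0, k−1} or j ∈ {0, ℓ−1}; the set D induces a cycle in G. Suppose A ⊆ V(G) is such that both A and V(G)∖A induce connected (possibly empty) subgraphs of G. Then A ∩ D is either empty, or equal to all of D, or consists of consecutive vertices along the boundary cycle (i.e., induces a path in the cycle induced by D). -/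
/-- The boundary vertices of the `k × ℓ` grid: those `(i,j)` with `i ∈ {0, k-1}` or
`j ∈ {0, ℓ-1}`.  For `k, ℓ ≥ 3` they induce a cycle in the grid. -/
def gridBoundary (k l : ℕ) : Set (Fin k × Fin l) :=
  {v | v.1.val = 0 ∨ v.1.val = k - 1 ∨ v.2.val = 0 ∨ v.2.val = l - 1}

theorem grid_adj_iff {k l : ℕ} (u v : Fin k × Fin l) :
    (gridGraph k l).Adj u v ↔
      ((u.1.val = v.1.val ∧ (u.2.val + 1 = v.2.val ∨ v.2.val + 1 = u.2.val)) ∨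
       (u.2.val = v.2.val ∧ (u.1.val + 1 = v.1.val ∨ v.1.val + 1 = u.1.val))) := by
  obtain ⟨⟨a, ha⟩, ⟨b, hb⟩⟩ := u
  obtain ⟨⟨c, hc⟩, ⟨d, hd⟩⟩ := v
  simp only [gridGraph, SimpleGraph.fromRel_adj, ne_eq, Prod.mk.injEq, Fin.mk.injEq]
  omega

/-- Signed number of crossings of the step `u → v` with the ray above the face `(x,y)`. -/
def stepCross (ux uy vx vy x y : ℤ) : ℤ :=
  if uy = vy ∧ y < uy then
    (if ux = x ∧ vx = x + 1 then 1 else if ux = x + 1 ∧ vx = x then -1 else 0) else 0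

/-- The flux properties. -/
def FluxProp (k l : ℕ) (A : Set (Fin k × Fin l)) (a a' : Fin k × Fin l)
    (F : ℤ → ℤ → ℤ) : Prop :=
  (∀ q : Fin k × Fin l, q ∉ A →
    F q.1.val q.2.val = F q.1.val (q.2.val - 1) ∧
    F (q.1.val - 1) q.2.val - F q.1.val q.2.val =
      (if a'.1.val = q.1.val ∧ q.2.val < a'.2.val then 1 else 0)
      - (if a.1.val = q.1.val ∧ q.2.val < a.2.val then 1 else 0)) ∧
  (∀ x y : ℤ, (x = -1 ∨ (k : ℤ) ≤ x + 1 ∨ (l : ℤ) ≤ y + 1) → F x y = 0) ∧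
  (∀ x : ℤ, F x (-1) = (if (a.1.val : ℤ) ≤ x then 1 else 0)
      - (if (a'.1.val : ℤ) ≤ x then 1 else 0))

theorem flux_exists {k l : ℕ} (A : Set (Fin k × Fin l)) (a a' : A)
    (h : ((gridGraph k l).induce A).Reachable a a') :
    ∃ F, FluxProp k l A a a' F := by
  rw [SimpleGraph.reachable_iff_reflTransGen] at h
  induction h with
  | refl => exact ⟨fun _ _ => 0, by simp [FluxProp]⟩
  | @tail u v _ huv ih =>
    obtain ⟨F, h1, h2, h3⟩ := ih
    rw [SimpleGraph.comap_adj, grid_adj_iff] at huv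
    obtain ⟨⟨⟨ux, hux⟩, ⟨uy, huy⟩⟩, hu⟩ := u
    obtain ⟨⟨⟨vx, hvx⟩, ⟨vy, hvy⟩⟩, hv⟩ := v
    simp only [Function.Embedding.subtype_apply] at huv h1 h2 h3 ⊢
    refine ⟨fun x y => F x y + stepCross ux uy vx vy x y, ?_, ?_, ?_⟩
    · intro q hq
      have hqu : ¬ (q.1.val = ux ∧ q.2.val = uy) := by
        rintro ⟨e1, e2⟩
        apply hq
        convert hu
      have hqv : ¬ (q.1.val = vx ∧ q.2.val = vy) := by
        rintro ⟨e1, e2⟩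
        apply hq
        convert hv
      obtain ⟨g1, g2⟩ := h1 q hq
      generalize (q.1.val) = x at *
      generalize (q.2.val) = y at *
      constructor
      · simp only [stepCross]
        rw [g1]
        congr 1
        clear g1 g2 h1 h2 h3
        grind
      · have : stepCross ux uy vx vy (x - 1) y - stepCross ux uy vx vy x y =
          (if vx = x ∧ y < vy then 1 else 0) - (if ux = x ∧ y < uy then 1 else 0) := by
          clear g1 g2 h1 h2 h3
          simp only [stepCross]
          rcases huv with ⟨e, e'⟩ | ⟨e, e' | e'⟩ <;> split_ifs <;> omega
        simp only at g2 ⊢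
        linarith
    · intro x y hxy
      have := h2 x y hxy
      simp only [this, stepCross]
      clear h1 h2 h3
      split_ifs <;> omega
    · intro x
      have := h3 x
      simp only [this, stepCross]
      clear h1 h2 h3
      grind

/-- Correction term. -/
def corrT (m n ax ay x y : ℤ) : ℤ :=
  if ay = n then (if x < ax then -1 else 0)
  else if ax = m then (if x = m ∧ y < ay then 1 else 0) else 0

/-- Boundary evaluation. -/
def corrPhi (ax ay x y : ℤ) : ℤ :=
  if y = 0 then (if ax ≤ x then -1 else 0)
  else if x = 0 then (if ax = 0 ∧ y < ay then -1 else 0) else 0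

/-- The pairing of two boundary points. -/
def corrJ (m n ax ay x y : ℤ) : ℤ := corrPhi ax ay x y + corrT m n ax ay x y

theorem flux_const {k l : ℕ} (A : Set (Fin k × Fin l)) (a a' : Fin k × Fin l)
    (haA : a ∈ A) (haA' : a' ∈ A)
    (ha : a ∈ gridBoundary k l) (ha' : a' ∈ gridBoundary k l) (F : ℤ → ℤ → ℤ)
    (hF : FluxProp k l A a a' F) (b b' : (Aᶜ : Set (Fin k × Fin l)))
    (h : ((gridGraph k l).induce Aᶜ).Reachable b b') :
    F b.1.1.val b.1.2.val + corrT (k-1) (l-1) a'.1.val a'.2.val b.1.1.val b.1.2.val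
      - corrT (k-1) (l-1) a.1.val a.2.val b.1.1.val b.1.2.val =
    F b'.1.1.val b'.1.2.val + corrT (k-1) (l-1) a'.1.val a'.2.val b'.1.1.val b'.1.2.val
      - corrT (k-1) (l-1) a.1.val a.2.val b'.1.1.val b'.1.2.val := by
  rw [SimpleGraph.reachable_iff_reflTransGen] at h
  induction h with
  | refl => rfl
  | @tail u v _ huv ih =>
    rw [ih]
    obtain ⟨h1, -, -⟩ := hF
    rw [SimpleGraph.comap_adj, grid_adj_iff] at huv
    obtain ⟨u, hu⟩ := u
    obtain ⟨v, hv⟩ := v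
    simp only [Function.Embedding.subtype_apply] at huv ⊢
    have key : ∀ (c : Fin k × Fin l), c ∈ A → c ∈ gridBoundary k l →
        ∀ q : Fin k × Fin l, q ∉ A → ∀ p : Fin k × Fin l, p ∉ A → 
        ((q.1.val = p.1.val ∧ p.2.val + 1 = q.2.val) →
          corrT (k-1) (l-1) c.1.val c.2.val p.1.val p.2.val =
          corrT (k-1) (l-1) c.1.val c.2.val q.1.val q.2.val) ∧
        ((q.2.val = p.2.val ∧ p.1.val + 1 = q.1.val) →
          corrT (k-1) (l-1) c.1.val c.2.val p.1.val p.2.val -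
          corrT (k-1) (l-1) c.1.val c.2.val q.1.val q.2.val =
          - (if c.1.val = q.1.val ∧ q.2.val < c.2.val then 1 else 0)) := by
      intro c hc hcb q hq p hp
      have n1 : ¬ (c.1.val = q.1.val ∧ c.2.val = q.2.val) := by
        rintro ⟨e1, e2⟩
        exact hq (by rwa [← Prod.ext (Fin.ext e1) (Fin.ext e2)])
      have n2 : ¬ (c.1.val = p.1.val ∧ c.2.val = p.2.val) := by
        rintro ⟨e1, e2⟩
        exact hp (by rwa [← Prod.ext (Fin.ext e1) (Fin.ext e2)])
      simp only [gridBoundary, Set.mem_ofPred_eq] at hcb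
      have b1 := c.1.isLt
      have b2 := c.2.isLt
      have b3 := q.1.isLt
      have b4 := q.2.isLt
      have b5 := p.1.isLt
      have b6 := p.2.isLt
      generalize (q.1.val) = qx at *
      generalize (q.2.val) = qy at *
      generalize (p.1.val) = px at *
      generalize (p.2.val) = py at *
      generalize (c.1.val) = cx at *
      generalize (c.2.val) = cy at *
      clear h1 huv ih
      simp only [corrT]
      constructor
      · intro hh
        split_ifs <;> omega
      · intro hh
        split_ifs <;> omega
    have step : ∀ q : Fin k × Fin l, q ∉ A → ∀ p : Fin k × Fin l, p ∉ A → 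
        ((q.1.val = p.1.val ∧ p.2.val + 1 = q.2.val) ∨
         (q.2.val = p.2.val ∧ p.1.val + 1 = q.1.val)) → 
        F p.1.val p.2.val + corrT (k-1) (l-1) a'.1.val a'.2.val p.1.val p.2.val
          - corrT (k-1) (l-1) a.1.val a.2.val p.1.val p.2.val =
        F q.1.val q.2.val + corrT (k-1) (l-1) a'.1.val a'.2.val q.1.val q.2.val
          - corrT (k-1) (l-1) a.1.val a.2.val q.1.val q.2.val := by
      intro q hq p hp hqp
      obtain ⟨g1, g2⟩ := h1 q hq
      obtain ⟨k1, k2⟩ := key a haA ha q hq p hp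
      obtain ⟨k1', k2'⟩ := key a' haA' ha' q hq p hp
      rcases hqp with hh | hh
      · rw [k1 hh, k1' hh, g1, hh.1]
        have : (p.2.val : ℤ) = (q.2.val : ℤ) - 1 := by omega
        rw [this]
      · have e1 := k2 hh
        have e2 := k2' hh
        have e3 : (p.1.val : ℤ) = (q.1.val : ℤ) - 1 := by omega
        have e4 : F p.1.val p.2.val = F (q.1.val - 1) q.2.val := by rw [e3, hh.1]
        linarith
    rcases huv with ⟨e, h | h⟩ | ⟨e, h | h⟩
    · exact step v hv u hu (Or.inl ⟨e.symm, h⟩)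
    · exact (step u hu v hv (Or.inl ⟨e, h⟩)).symm
    · exact step v hv u hu (Or.inr ⟨e.symm, h⟩)
    · exact (step u hu v hv (Or.inr ⟨e, h⟩)).symm

theorem flux_bdry {k l : ℕ} (A : Set (Fin k × Fin l)) (a a' : Fin k × Fin l)
    (F : ℤ → ℤ → ℤ)
    (hF : FluxProp k l A a a' F) (b : Fin k × Fin l) (hbA : b ∉ A)
    (hb : b ∈ gridBoundary k l) :
    F b.1.val b.2.val = corrPhi a'.1.val a'.2.val b.1.val b.2.val
      - corrPhi a.1.val a.2.val b.1.val b.2.val := by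
  obtain ⟨h1, h2, h3⟩ := hF
  obtain ⟨g1, g2⟩ := h1 b hbA
  simp only [gridBoundary, Set.mem_ofPred_eq] at hb
  have b1 := b.1.isLt
  have b2 := b.2.isLt
  generalize (b.1.val) = x at *
  generalize (b.2.val) = y at *
  by_cases hy : y = 0
  · subst hy
    have := h3 x
    simp only [Nat.cast_zero, zero_sub] at g1
    rw [Nat.cast_zero, g1, this]
    simp only [corrPhi]
    split_ifs <;> omega
  · by_cases hx : x = 0
    · subst hx
      have := h2 (-1) y (Or.inl rfl)
      simp only [Nat.cast_zero, zero_sub] at g2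
      simp only [corrPhi, Nat.cast_zero]
      rw [this] at g2
      clear h1 h2 h3
      split_ifs at g2 ⊢ <;> omega
    · rw [h2 x y (by omega)]
      simp only [corrPhi]
      split_ifs <;> omega

/-- first coordinate of the boundary parametrisation -/
def cycX (m n t : ℕ) : ℕ := if t ≤ m then t else if t ≤ m + n then m else 2 * m + n - t

/-- second coordinate of the boundary parametrisation -/
def cycY (m n t : ℕ) : ℕ :=
  if t ≤ m then 0 else if t ≤ m + n then t - m else if t ≤ 2 * m + n then n
  else 2 * m + 2 * n - t

set_option maxHeartbeats 4000000 in
theorem corrJ_cyc (m n s t : ℕ) (hm : 2 ≤ m) (hn : 2 ≤ n) (hs : s < 2 * m + 2 * n)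
    (ht : t < 2 * m + 2 * n) (hst : s ≠ t) :
    corrJ m n (cycX m n s) (cycY m n s) (cycX m n t) (cycY m n t) =
      (if m + n ≤ s then -1 else 0) + (if t ≤ m then 0 else 1) - (if s < t then 1 else 0) := by
  have hs' : (s ≤ m ∧ cycX m n s = s ∧ cycY m n s = 0) ∨
    (m < s ∧ s ≤ m + n ∧ cycX m n s = m ∧ cycY m n s = s - m) ∨
    (m + n < s ∧ s ≤ 2 * m + n ∧ cycX m n s = 2 * m + n - s ∧ cycY m n s = n) ∨
    (2 * m + n < s ∧ cycX m n s = 0 ∧ cycY m n s = 2 * m + 2 * n - s) := by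
    simp only [cycX, cycY]
    split_ifs <;> omega
  have ht' : (t ≤ m ∧ cycX m n t = t ∧ cycY m n t = 0) ∨
    (m < t ∧ t ≤ m + n ∧ cycX m n t = m ∧ cycY m n t = t - m) ∨
    (m + n < t ∧ t ≤ 2 * m + n ∧ cycX m n t = 2 * m + n - t ∧ cycY m n t = n) ∨
    (2 * m + n < t ∧ cycX m n t = 0 ∧ cycY m n t = 2 * m + 2 * n - t) := by
    simp only [cycX, cycY]
    split_ifs <;> omega
  generalize cycX m n s = sx at *
  generalize cycY m n s = sy at *
  generalize cycX m n t = tx at *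
  generalize cycY m n t = ty at *
  simp only [corrJ, corrPhi, corrT]
  rcases hs' with h | h | h | h <;> rcases ht' with h' | h' | h' | h' <;>
    split_ifs <;> omega

theorem cyc_bound (m n t : ℕ) : cycX m n t < m + 1 ∧ cycY m n t < n + 1 := by
  simp only [cycX, cycY]
  split_ifs <;> omega

/-- The boundary cycle. -/
def cyc (m n t : ℕ) : Fin (m + 1) × Fin (n + 1) :=
  (⟨cycX m n t, (cyc_bound m n t).1⟩, ⟨cycY m n t, (cyc_bound m n t).2⟩)

theorem cyc_mem (m n t : ℕ) (ht : t ≤ 2 * m + 2 * n) :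
    cyc m n t ∈ gridBoundary (m + 1) (n + 1) := by
  simp only [gridBoundary, Set.mem_ofPred_eq, cyc, cycX, cycY]
  split_ifs <;> omega

theorem cyc_surj (m n : ℕ) (hm : 2 ≤ m) (v : Fin (m + 1) × Fin (n + 1))
    (hv : v ∈ gridBoundary (m + 1) (n + 1)) : ∃ t, t < 2 * m + 2 * n ∧ cyc m n t = v := by
  obtain ⟨⟨x, hx⟩, ⟨y, hy⟩⟩ := v
  simp only [gridBoundary, Set.mem_ofPred_eq] at hv
  simp only [cyc, Prod.mk.injEq, Fin.mk.injEq]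
  by_cases h1 : y = 0
  · exact ⟨x, by omega, by simp only [cycX]; split_ifs <;> omega,
      by simp only [cycY]; split_ifs <;> omega⟩
  by_cases h2 : x = m
  · exact ⟨m + y, by omega, by simp only [cycX]; split_ifs <;> omega,
      by simp only [cycY]; split_ifs <;> omega⟩
  by_cases h3 : y = n
  · exact ⟨2 * m + n - x, by omega, by simp only [cycX]; split_ifs <;> omega,
      by simp only [cycY]; split_ifs <;> omega⟩
  · exact ⟨2 * m + 2 * n - y, by omega, by simp only [cycX]; split_ifs <;> omega,
      by simp only [cycY]; split_ifs <;> omega⟩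

theorem cyc_adj (m n t : ℕ) (ht : t < 2 * m + 2 * n) :
    (gridGraph (m + 1) (n + 1)).Adj (cyc m n t) (cyc m n (t + 1)) := by
  rw [grid_adj_iff]
  simp only [cyc, cycX, cycY]
  split_ifs <;> omega

theorem cyc_last (m n : ℕ) (hm : 2 ≤ m) (hn : 2 ≤ n) :
    cyc m n (2 * m + 2 * n) = cyc m n 0 := by
  simp only [cyc, Prod.mk.injEq, Fin.mk.injEq, cycX, cycY]
  constructor <;> split_ifs <;> omega

theorem cyc_reach (m n : ℕ) (S : Set (Fin (m + 1) × Fin (n + 1))) (s t : ℕ) (hst : s ≤ t)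
    (ht : t ≤ 2 * m + 2 * n) (h : ∀ i, s ≤ i → i ≤ t → cyc m n i ∈ S) :
    ((gridGraph (m + 1) (n + 1)).induce S).Reachable
      ⟨cyc m n s, h s le_rfl hst⟩ ⟨cyc m n t, h t hst le_rfl⟩ := by
  induction t, hst using Nat.le_induction with
  | base => exact SimpleGraph.Reachable.refl _
  | succ t hst ih =>
    refine (ih (by omega) (fun i h1 h2 => h i h1 (by omega))).trans ?_
    apply SimpleGraph.Adj.reachable
    rw [SimpleGraph.comap_adj]
    exact cyc_adj m n t (by omega)

theorem no_cross (m n : ℕ) (hm : 2 ≤ m) (hn : 2 ≤ n)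
    (A : Set (Fin (m + 1) × Fin (n + 1)))
    (hA : ((gridGraph (m + 1) (n + 1)).induce A).Preconnected)
    (hAc : ((gridGraph (m + 1) (n + 1)).induce Aᶜ).Preconnected)
    (s t u w : ℕ) (hs : cyc m n s ∈ A) (ht : cyc m n t ∈ A) (hu : cyc m n u ∉ A)
    (hw : cyc m n w ∉ A) (h1 : s < u) (h2 : u < t) (ht' : t < 2 * m + 2 * n)
    (hw' : w < 2 * m + 2 * n) (h3 : w < s ∨ t < w) : False := by
  obtain ⟨F, hF⟩ := flux_exists A ⟨_, hs⟩ ⟨_, ht⟩ (hA _ _)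
  have c := flux_const A _ _ hs ht (cyc_mem m n s (by omega)) (cyc_mem m n t (by omega)) F hF
    ⟨_, hu⟩ ⟨_, hw⟩ (hAc _ _)
  have e1 := flux_bdry A _ _ F hF _ hu (cyc_mem m n u (by omega))
  have e2 := flux_bdry A _ _ F hF _ hw (cyc_mem m n w (by omega))
  have j1 := corrJ_cyc m n s u hm hn (by omega) (by omega) (by omega)
  have j2 := corrJ_cyc m n t u hm hn (by omega) (by omega) (by omega)
  have j3 := corrJ_cyc m n s w hm hn (by omega) (by omega) (by omega)
  have j4 := corrJ_cyc m n t w hm hn (by omega) (by omega) (by omega)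
  simp only [cyc, Nat.cast_add, Nat.cast_one, add_sub_cancel_right] at c e1 e2
  simp only [corrJ] at j1 j2 j3 j4
  have f : ((if s < u then 1 else 0) - (if t < u then 1 else 0) : ℤ) =
     (if s < w then 1 else 0) - (if t < w then 1 else 0) := by linarith
  split_ifs at f <;> omega

theorem reach_aux (m n : ℕ) (hm : 2 ≤ m) (hn : 2 ≤ n)
    (A : Set (Fin (m + 1) × Fin (n + 1)))
    (hA : ((gridGraph (m + 1) (n + 1)).induce A).Preconnected)
    (hAc : ((gridGraph (m + 1) (n + 1)).induce Aᶜ).Preconnected)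
    (s t : ℕ) (hst : s ≤ t) (ht' : t < 2 * m + 2 * n)
    (hs : cyc m n s ∈ A ∩ gridBoundary (m + 1) (n + 1))
    (ht : cyc m n t ∈ A ∩ gridBoundary (m + 1) (n + 1)) :
    ((gridGraph (m + 1) (n + 1)).induce (A ∩ gridBoundary (m + 1) (n + 1))).Reachable
      ⟨_, hs⟩ ⟨_, ht⟩ := by
  by_cases H : ∀ i, s ≤ i → i ≤ t → cyc m n i ∈ A
  · exact cyc_reach m n (A ∩ gridBoundary (m + 1) (n + 1)) s t hst ht'.le
      (fun i h1 h2 => ⟨H i h1 h2, cyc_mem m n i (by omega)⟩)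
  · push Not at H
    obtain ⟨u, hu1, hu2, hu⟩ := H
    have hsu : s ≠ u := by rintro rfl; exact hu hs.1
    have htu : t ≠ u := by rintro rfl; exact hu ht.1
    have out : ∀ w, w < 2 * m + 2 * n → (w ≤ s ∨ t ≤ w) → cyc m n w ∈ A := by
      intro w hw hc
      by_contra hwA
      have hsw : s ≠ w := by rintro rfl; exact hwA hs.1
      have htw : t ≠ w := by rintro rfl; exact hwA ht.1
      exact no_cross m n hm hn A hA hAc s t u w hs.1 ht.1 hu hwA (by omega) (by omega) ht' hw
        (by omega)
    have r1 := cyc_reach m n (A ∩ gridBoundary (m + 1) (n + 1)) 0 s (by omega) (by omega)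
      (fun i h1 h2 => ⟨out i (by omega) (by omega), cyc_mem m n i (by omega)⟩)
    have r2 := cyc_reach m n (A ∩ gridBoundary (m + 1) (n + 1)) t (2 * m + 2 * n)
      (by omega) (by omega)
      (fun i h1 h2 => by
        refine ⟨?_, cyc_mem m n i (by omega)⟩
        by_cases hi : i = 2 * m + 2 * n
        · rw [hi, cyc_last m n hm hn]
          exact out 0 (by omega) (by omega)
        · exact out i (by omega) (by omega))
    simp only [cyc_last m n hm hn] at r2
    exact (r2.trans r1).symm

/-- If both `A` and its complement induce connected (possibly empty) subgraphs of the
`k × ℓ` grid (`k, ℓ ≥ 3`), then the intersection of `A` with the boundary cycle is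
empty, all of the boundary, or a set of consecutive vertices along the boundary cycle
(equivalently, it induces a connected subgraph, i.e. a path, of that cycle). -/
theorem boundary_trace_is_arc (k l : ℕ) (hk : 3 ≤ k) (hl : 3 ≤ l)
    (A : Set (Fin k × Fin l))
    (hA : ((gridGraph k l).induce A).Preconnected)
    (hAc : ((gridGraph k l).induce Aᶜ).Preconnected) :
    A ∩ gridBoundary k l = ∅ ∨
    A ∩ gridBoundary k l = gridBoundary k l ∨
    (A ∩ gridBoundary k l ≠ gridBoundary k l ∧
      ((gridGraph k l).induce (A ∩ gridBoundary k l)).Connected) := by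
  obtain ⟨m, rfl⟩ : ∃ m, k = m + 1 := ⟨k - 1, by omega⟩
  obtain ⟨n, rfl⟩ : ∃ n, l = n + 1 := ⟨l - 1, by omega⟩
  by_cases h1 : A ∩ gridBoundary (m + 1) (n + 1) = ∅
  · exact Or.inl h1
  by_cases h2 : A ∩ gridBoundary (m + 1) (n + 1) = gridBoundary (m + 1) (n + 1)
  · exact Or.inr (Or.inl h2)
  refine Or.inr (Or.inr ⟨h2, ?_⟩)
  rw [SimpleGraph.connected_iff]
  refine ⟨?_, (Set.nonempty_iff_ne_empty.mpr h1).to_subtype⟩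
  rintro ⟨v, hv⟩ ⟨w, hw⟩
  obtain ⟨s, hs, rfl⟩ := cyc_surj m n (by omega) v hv.2
  obtain ⟨t, ht, rfl⟩ := cyc_surj m n (by omega) w hw.2
  rcases le_total s t with h | h
  · exact reach_aux m n (by omega) (by omega) A hA hAc s t h ht hv hw
  · exact (reach_aux m n (by omega) (by omega) A hA hAc t s h hs hw hv).symm
end
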